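/- arXiv:1510.03052 — 2 statements merged into one kernel-verified Lean document; each statement's English description precedes it below -/
import Mathlib

section
/- There is no (r)-pancyclic graph with r ≥ 3 on v vertices having at most v + 5 edges. That is, for every r ≥ 3, every finite simple graph G on v vertices whose edge count is at most v + 5 fails to contain precisely r cycles of every length from 3 to v. -/
open SimpleGraph

/-- The number of cycles of length `k` in `G`, counted as subgraphs of `G`
isomorphic to the cycle graph `C_k`. -/
noncomputable def cycleCount {V : Type*} (G : SimpleGraph V) (k : ℕ) : ℕ :=
  {H : G.Subgraph | Nonempty (H.coe ≃g cycleGraph k)}.ncard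

/-- A graph on `v ≥ 3` vertices is `(r)`-pancyclic if it contains precisely `r`
cycles of every length from `3` to `v`. -/
def IsRPancyclic {V : Type*} [Fintype V] (G : SimpleGraph V) (r : ℕ) : Prop :=
  3 ≤ Fintype.card V ∧
    ∀ k : ℕ, 3 ≤ k → k ≤ Fintype.card V → cycleCount G k = r

/-!
A graph with three cycles of length `v` has a Hamiltonian cycle, and at least one and at most five
further edges, the chords. The ends of the chords, at most ten vertices, divide the Hamiltonian
cycle into arcs. The cycles of the graph are the minimal nonempty sets of edges with even degrees,
and the sets of edges with even degrees form a space over `ZMod 2`, which is spanned by the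
Hamiltonian cycle and, for each chord, the cycle it closes up with the arcs on one side of it.
So the way in which the chords join the ends determines which sets of arcs and chords make up the
cycles, represented by the ones in the binary expansion of a natural number, their mask. The
lengths of the arcs then determine the lengths of the cycles. There are fewer than `2 ^ 6` cycles
and the same number, at least three, of each length from `3` to `v`, so that `v` is bounded and
there are only finitely many choices of arc lengths. The kernel searches through all of them,
for all ways to join at most ten ends by at most five chords. We may number the ends along the
cycle, starting from a chord which cuts off the smallest number `s` of arcs.
-/

namespace RPancyclic

/-! ### The search -/

/-- The value `f n`, with `n` evaluated first when the kernel computes it. -/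
def force (n : ℕ) (f : ℕ → Bool) : Bool :=
  n.rec (f 0) fun m _ => f m.succ

theorem force_eq (n : ℕ) (f : ℕ → Bool) : force n f = f n := by
  cases n <;> rfl

/-- The number of ones in the binary expansion of `m`, for `m < 2 ^ 10`: the product holds ten
copies of `m`, from the `i`-th of which the mask extracts the `i`-th bit into the position `11 i`.
Here and in the other functions of the search the operations on `ℕ` are applied without their
notation, since the kernel would spend most of its time unfolding the instances behind it. -/
def bitCount (m : ℕ) : ℕ :=
  ((m.mul ((Nat.pow 2 100).div 1023)).land ((Nat.pow 2 110).div 2047)).mod 2047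

theorem bitCount_eq : ∀ n ≤ 10, ∀ m < 2 ^ n,
    bitCount m = ∑ i ∈ Finset.range n, if m.testBit i then 1 else 0 := by
  decide +kernel

/-- The number with `n` digits `1` in base `256`. -/
def repunit (n : ℕ) : ℕ :=
  ((Nat.pow 256 n).sub 1).div 255

/-- Comparison of all digits in base `256` of `a` and `b` at once, where those digits are below
`128` and `H` has all digits equal to `128`. -/
def digitsLE (H a b : ℕ) : Bool :=
  (((b.add H).sub a).land H).beq H

/-- A necessary condition for a partial assignment of lengths to the arcs to extend to one with the
prescribed number of cycles of each length. Modulo `D`, the number `F` is the sum of `256 ^ b` over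
all cycles, where `b` is the length of the cycle so far, which will grow by at most `rem`. The
digits of `target` count the cycles up to each length in the end. -/
def lengthCheck (D rep H target rem F : ℕ) : Bool :=
  force (((F.mod D).mul rep).mod D) fun P =>
    (digitsLE H target P).and (digitsLE H ((P.mul (Nat.pow 256 rem)).mod D) target)

/-- Try all ways to lengthen one arc by at most `rem`, where `F₁` and `F₀` are the contributions of
the cycles which do and do not pass through it, and continue with `next` unless the whole length is
used up. -/
def lengthenArc (check next : ℕ → ℕ → Bool) (F₀ : ℕ) : ℕ → ℕ → Bool
  | 0, _ => true
  | rem + 1, F₁ => (next rem.succ (F₀.add F₁)).or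
      ((check rem (F₀.add (F₁.mul 256))).and (lengthenArc check next F₀ rem (F₁.mul 256)))

/-- Distribute the additional length `rem` over the first `i + 1` arcs. Each cycle is represented in
`F` by a summand `256 ^ b * K ^ a`, where `b` is its length so far and the bits of `a` are the arcs
among the first `i + 1` it passes through. -/
def arcSearch (check : ℕ → ℕ → Bool) (K : ℕ) : ℕ → ℕ → ℕ → Bool
  | 0, rem, F => check 0 ((F.mod K).add ((F.div K).mul (Nat.pow 256 rem)))
  | i + 1, rem, F =>
      force (F.mod (Nat.pow K (Nat.pow 2 i.succ))) fun F₀ =>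
      force (F.div (Nat.pow K (Nat.pow 2 i.succ))) fun F₁ =>
      lengthenArc check (arcSearch check K i) F₀ rem F₁

/-- The number of labels in the mask `u` with `k` arcs, hence the length of the cycle if all arcs
have length one. -/
def labelCount (k u : ℕ) : ℕ :=
  (bitCount (u.mod (Nat.pow 2 k))).add (bitCount (u.div (Nat.pow 2 k)))

/-- The sum of the numbers by which `arcSearch` represents the cycles with masks `us`. -/
def cyclePoly (K k : ℕ) : List ℕ → ℕ
  | [] => 0
  | u :: us => (cyclePoly K k us).add
      ((Nat.pow 256 (labelCount k u)).mul (Nat.pow K (u.mod (Nat.pow 2 k))))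

/-- Search for positive lengths of `k` arcs with sum `v` for which there are exactly `r` cycles of
each length from `3` to `v`, where `us` is the list of the masks of all cycles. -/
def lengthSearch (k v r : ℕ) (us : List ℕ) : Bool :=
  force (Nat.pow 256 v.succ) fun D =>
  force (repunit v.succ) fun rep =>
  force (rep.mul 128) fun H =>
  force ((((rep.mul (Nat.pow 256 3)).mul r).mul rep).mod D) fun target =>
  force (cyclePoly D.succ k us) fun F =>
  force (v.sub k) fun rem =>
    (lengthCheck D rep H target rem F).and
      ((rem.beq 0).or (arcSearch (lengthCheck D rep H target) D.succ k.pred rem F))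

/-- Search for a number `n + 2` of vertices and for lengths of `k` arcs for which there are equally
many cycles of each length from `3` to `n + 2`, and at least three. -/
def typeSearch (k : ℕ) (us : List ℕ) : Bool :=
  force us.length fun N => (List.range (N.div 3).succ).any fun n =>
    ((N.mod n).beq 0).and ((k.ble (n.add 2)).and (lengthSearch k (n.add 2) (N.div n) us))

/-- No mask in `us` is contained in `u`. -/
def containsNone (us : List ℕ) (u : ℕ) : Bool :=
  us.rec true fun z _ ih => ((z.land u).beq z).rec ih false

/-- Add to `evens` all `u ^^^ w` for `u` in a list, and add to `cycles` those which contain none of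
`cycles₀`. -/
def extend (w : ℕ) (cycles₀ : List ℕ) (next : List ℕ → List ℕ → Bool) :
    List ℕ → List ℕ → List ℕ → Bool
  | [], evens, cycles => next evens cycles
  | u :: us, evens, cycles => force (u.xor w) fun x =>
      (containsNone cycles₀ x).rec (extend w cycles₀ next us (x :: evens) cycles)
        (extend w cycles₀ next us (x :: evens) (x :: cycles))

/-- Update the lists of masks of even subgraphs and of cycles for a new chord `d` with label
`k + j`. -/
def addChord (k j : ℕ) (d : ℕ × ℕ) (evens cycles : List ℕ) (next : List ℕ → List ℕ → Bool) : Bool :=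
  force (((Nat.pow 2 d.2).sub (Nat.pow 2 d.1)).add (Nat.pow 2 (k.add j))) fun w =>
    extend w cycles next evens evens cycles

/-- Choose `n` more chords from a list such that all `k` branch vertices are endpoints of chords.
The bits of `cov` are the endpoints of the `j` chords chosen so far. -/
def chordSearch (k : ℕ) : List (ℕ × ℕ) → ℕ → ℕ → ℕ → List ℕ → List ℕ → Bool
  | _, 0, _, _, _, cycles => typeSearch k cycles
  | [], _ + 1, _, _, _, _ => false
  | d :: ds, n + 1, j, cov, evens, cycles =>
      ((cov.succ.mod (Nat.pow 2 d.1)).beq 0).and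
        ((force (cov.lor ((Nat.pow 2 d.1).add (Nat.pow 2 d.2))) fun cov' =>
          ((k.sub (bitCount cov')).ble (n.mul 2)).and
            (addChord k j d evens cycles (chordSearch k ds n j.succ cov'))).or
        (chordSearch k ds (n + 1) j cov evens cycles))

/-- The possible chords besides `(0, s)` if no chord spans fewer than `s` arcs. -/
def candidates (k s : ℕ) : List (ℕ × ℕ) :=
  ((List.range k).product (List.range k)).filter fun d =>
    (d.1.add s).ble d.2 && ((d.2.sub d.1).add s).ble k && !(d.1.beq 0 && d.2.beq s)

/-- Search for a graph with a Hamiltonian cycle, `c + 1` further edges with altogether `k`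
endpoints, and the same number, at least three, of cycles of each length. -/
def search (c k : ℕ) : Bool :=
  (List.range k).any fun s => (s.beq 0).not.and <|
    force ((Nat.pow 2 k).sub 1) fun full =>
      addChord k 0 (0, s) [0, full] [full]
        (chordSearch k (candidates k s) c 1 (1 + Nat.pow 2 s))

theorem search_eq_false : ∀ c < 5, ∀ k < 2 * c + 3, search c k = false := by
  decide +kernel

/-! ### Soundness of the search for arc lengths -/

section Digits

theorem repunit_eq (n : ℕ) : repunit n = ∑ m ∈ Finset.range n, 256 ^ m :=
  (Nat.geomSum_eq (by norm_num) n).symm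

theorem sum_digits_succ (n : ℕ) (d : ℕ → ℕ) :
    ∑ m ∈ Finset.range (n + 1), 256 ^ m * d m =
      2 ^ 8 * ∑ m ∈ Finset.range n, 256 ^ m * d (m + 1) + d 0 := by
  rw [Finset.sum_range_succ', Finset.mul_sum, pow_zero, one_mul]
  congr 1
  refine Finset.sum_congr rfl fun m _ => ?_
  rw [pow_succ', mul_assoc]
  norm_num

theorem sum_digits_lt (n : ℕ) (d : ℕ → ℕ) (hd : ∀ m, d m < 256) :
    ∑ m ∈ Finset.range n, 256 ^ m * d m < 256 ^ n := by
  induction n with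
  | zero => simp
  | succ n ih =>
    rw [Finset.sum_range_succ, pow_succ]
    have := Nat.mul_le_mul_left (256 ^ n) (Nat.le_of_lt_succ (hd n))
    lia

theorem land_sum_digits (n : ℕ) (d : ℕ → ℕ) (hd : ∀ m, d m < 128) :
    (∑ m ∈ Finset.range n, 256 ^ m * (128 + d m)) &&& (∑ m ∈ Finset.range n, 256 ^ m * 128) =
      ∑ m ∈ Finset.range n, 256 ^ m * 128 := by
  induction n generalizing d with
  | zero => simp
  | succ n ih =>
    have h0 : ∀ x < 128, (128 + x) &&& 128 = 128 := by decide
    rw [sum_digits_succ, sum_digits_succ n fun _ => 128]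
    refine Nat.eq_of_testBit_eq fun i => ?_
    rw [Nat.testBit_land, Nat.testBit_two_pow_mul_add _ (by have := hd 0; lia),
      Nat.testBit_two_pow_mul_add _ (by norm_num)]
    split_ifs
    · rw [← Nat.testBit_land, h0 _ (hd 0)]
    · rw [← Nat.testBit_land, ih _ fun m => hd (m + 1)]

theorem digitsLE_of_forall_le (n : ℕ) (a b : ℕ → ℕ) (hab : ∀ m, a m ≤ b m)
    (hb : ∀ m, b m < 128) :
    digitsLE (repunit n * 128) (∑ m ∈ Finset.range n, 256 ^ m * a m)
      (∑ m ∈ Finset.range n, 256 ^ m * b m) = true := by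
  have hsub : ∑ m ∈ Finset.range n, 256 ^ m * b m + repunit n * 128 -
      ∑ m ∈ Finset.range n, 256 ^ m * a m =
        ∑ m ∈ Finset.range n, 256 ^ m * (128 + (b m - a m)) := by
    refine Nat.sub_eq_of_eq_add ?_
    rw [repunit_eq, Finset.sum_mul, ← Finset.sum_add_distrib, ← Finset.sum_add_distrib]
    refine Finset.sum_congr rfl fun m _ => ?_
    rw [← mul_add, ← mul_add]
    congr 1
    have := hab m
    lia
  change Nat.beq ((_ + _ - _) &&& _) _ = true
  rw [hsub, Nat.beq_eq, repunit_eq, Finset.sum_mul]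
  exact land_sum_digits n _ fun m => by have := hb m; lia

/-- The number whose digits in base `256` count the masks with each value of `len`. -/
def lengthPoly (len : ℕ → ℕ) (us : List ℕ) : ℕ :=
  (us.map fun u => 256 ^ len u).sum

theorem pow_mul_repunit_modEq (n b : ℕ) :
    256 ^ b * repunit n ≡ ∑ m ∈ Finset.range n with b ≤ m, 256 ^ m [MOD 256 ^ n] := by
  rw [repunit_eq, Finset.mul_sum]
  simp only [← pow_add]
  rw [← add_tsub_cancel_left b n, ← Finset.sum_Ico_eq_sum_range, add_tsub_cancel_left,
    ← Finset.sum_filter_add_sum_filter_not _ (· < n)]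
  have hdvd : 256 ^ n ∣ ∑ m ∈ Finset.Ico b (b + n) with ¬m < n, 256 ^ m :=
    Finset.dvd_sum fun m hm => pow_dvd_pow _ (by simp at hm; lia)
  have hfilter : (Finset.Ico b (b + n)).filter (· < n) = (Finset.range n).filter (b ≤ ·) := by
    ext m
    simp only [Finset.mem_filter, Finset.mem_Ico, Finset.mem_range]
    lia
  rw [hfilter]
  simpa only [add_zero] using (Nat.modEq_zero_iff_dvd.mpr hdvd).add_left
    (∑ m ∈ Finset.range n with b ≤ m, 256 ^ m)

theorem lengthPoly_mul_repunit_mod (n : ℕ) (len : ℕ → ℕ) (us : List ℕ) (hus : us.length < 256) :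
    lengthPoly len us * repunit n % 256 ^ n =
      ∑ m ∈ Finset.range n, 256 ^ m * us.countP (len · ≤ m) := by
  rw [← Nat.mod_eq_of_lt (sum_digits_lt n _ fun m => List.countP_le_length.trans_lt hus)]
  clear hus
  induction us with
  | nil => simp [lengthPoly]
  | cons u us ih =>
    have hcons : lengthPoly len (u :: us) = lengthPoly len us + 256 ^ len u := by
      simp [lengthPoly, add_comm]
    rw [hcons, add_mul]
    refine (Nat.ModEq.add ih (pow_mul_repunit_modEq n (len u))).trans (congrArg (· % _) ?_)
    rw [Finset.sum_filter, ← Finset.sum_add_distrib]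
    refine Finset.sum_congr rfl fun m _ => ?_
    rw [List.countP_cons]
    by_cases h : len u ≤ m <;> simp [h, mul_add]

theorem digitsLE_lengthPoly (n : ℕ) (p q : ℕ → ℕ) (us : List ℕ) (hus : us.length < 128)
    (hpq : ∀ u ∈ us, p u ≤ q u) :
    digitsLE (repunit n * 128) (lengthPoly q us * repunit n % 256 ^ n)
      (lengthPoly p us * repunit n % 256 ^ n) = true := by
  rw [lengthPoly_mul_repunit_mod _ _ _ (by lia), lengthPoly_mul_repunit_mod _ _ _ (by lia)]
  refine digitsLE_of_forall_le n _ _ (fun m => ?_) fun m => List.countP_le_length.trans_lt hus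
  exact List.countP_mono_left fun u hu h => by
    simp only [decide_eq_true_eq] at h ⊢
    exact (hpq u hu).trans h

theorem lengthPoly_add (len : ℕ → ℕ) (rem : ℕ) (us : List ℕ) :
    lengthPoly (fun u => len u + rem) us = lengthPoly len us * 256 ^ rem := by
  simp [lengthPoly, pow_add, List.sum_map_mul_right]

theorem lengthCheck_eq_true (n rem F target : ℕ) (b len : ℕ → ℕ) (us : List ℕ)
    (hus : us.length < 128) (hF : F ≡ lengthPoly b us [MOD 256 ^ n])
    (htarget : target = lengthPoly len us * repunit n % 256 ^ n)
    (hle : ∀ u ∈ us, b u ≤ len u) (hrem : ∀ u ∈ us, len u ≤ b u + rem) :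
    lengthCheck (256 ^ n) (repunit n) (repunit n * 128) target rem F = true := by
  have hP : F % 256 ^ n * repunit n % 256 ^ n = lengthPoly b us * repunit n % 256 ^ n := by
    rw [Nat.mod_mul_mod]
    exact hF.mul_right _
  have hshift : lengthPoly b us * repunit n % 256 ^ n * 256 ^ rem % 256 ^ n =
      lengthPoly (fun u => b u + rem) us * repunit n % 256 ^ n := by
    rw [Nat.mod_mul_mod, lengthPoly_add, mul_right_comm]
  rw [lengthCheck, force_eq]
  change (digitsLE _ _ (F % 256 ^ n * repunit n % 256 ^ n) &&
    digitsLE _ (F % 256 ^ n * repunit n % 256 ^ n * 256 ^ rem % 256 ^ n) _) = true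
  rw [hP, hshift, htarget, digitsLE_lengthPoly n b len us hus hle,
    digitsLE_lengthPoly n len _ us hus hrem, Bool.and_self]

end Digits

section ArcSearch

/-- The sum of the weights `x j` of the positions `j < n` of ones in the binary expansion of `u`. -/
def maskLength (x : ℕ → ℕ) (n u : ℕ) : ℕ :=
  ∑ j ∈ Finset.range n, if u.testBit j then x j else 0

theorem maskLength_succ (x : ℕ → ℕ) (n u : ℕ) :
    maskLength x (n + 1) u = maskLength x n u + if u.testBit n then x n else 0 :=
  Finset.sum_range_succ _ _

theorem maskLength_le_sum (x : ℕ → ℕ) (n u : ℕ) :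
    maskLength x n u ≤ ∑ j ∈ Finset.range n, x j :=
  Finset.sum_le_sum fun j _ => by split_ifs <;> simp

/-- The number by which `arcSearch` represents the cycles with masks `us` and current lengths
`b`. -/
def arcPoly (K i : ℕ) (b : ℕ → ℕ) (us : List ℕ) : ℕ :=
  (us.map fun u => 256 ^ b u * K ^ (u % 2 ^ i)).sum

theorem arcPoly_lt {v i : ℕ} {b : ℕ → ℕ} {us : List ℕ} (hus : us.length < 256)
    (hb : ∀ u ∈ us, b u ≤ v) :
    arcPoly (256 ^ (v + 1) + 1) i b us < (256 ^ (v + 1) + 1) ^ 2 ^ i := by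
  have hterm : ∀ u ∈ us, 256 ^ b u * (256 ^ (v + 1) + 1) ^ (u % 2 ^ i) ≤
      256 ^ v * (256 ^ (v + 1) + 1) ^ (2 ^ i - 1) := fun u hu =>
    Nat.mul_le_mul (Nat.pow_le_pow_right (by norm_num) (hb u hu))
      (Nat.pow_le_pow_right (Nat.succ_pos _) (Nat.le_pred_of_lt (Nat.mod_lt _ (by positivity))))
  calc arcPoly (256 ^ (v + 1) + 1) i b us
      ≤ us.length * (256 ^ v * (256 ^ (v + 1) + 1) ^ (2 ^ i - 1)) := by
        simpa only [arcPoly, List.length_map, smul_eq_mul] using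
          List.sum_le_card_nsmul (us.map fun u => 256 ^ b u * (256 ^ (v + 1) + 1) ^ (u % 2 ^ i)) _
            (List.forall_mem_map.mpr hterm)
    _ ≤ 256 * (256 ^ v * (256 ^ (v + 1) + 1) ^ (2 ^ i - 1)) := Nat.mul_le_mul_right _ hus.le
    _ = 256 ^ (v + 1) * (256 ^ (v + 1) + 1) ^ (2 ^ i - 1) := by ring
    _ < (256 ^ (v + 1) + 1) * (256 ^ (v + 1) + 1) ^ (2 ^ i - 1) :=
        Nat.mul_lt_mul_of_pos_right (Nat.lt_succ_self _) (by positivity)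
    _ = (256 ^ (v + 1) + 1) ^ 2 ^ i := mul_pow_sub_one (by positivity) _

theorem arcPoly_succ (K i : ℕ) (b : ℕ → ℕ) (us : List ℕ) :
    arcPoly K (i + 1) b us = arcPoly K i b (us.filter fun u => !u.testBit i) +
      K ^ 2 ^ i * arcPoly K i b (us.filter (·.testBit i)) := by
  induction us with
  | nil => simp [arcPoly]
  | cons u us ih =>
    simp only [arcPoly, List.map_cons, List.sum_cons] at ih ⊢
    rw [ih, Nat.mod_pow_succ, ← Nat.toNat_testBit]
    cases hu : u.testBit i <;> simp [hu, pow_add] <;> ring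

theorem arcPoly_filter_add (K i y : ℕ) (b : ℕ → ℕ) (us : List ℕ) :
    arcPoly K i b (us.filter fun u => !u.testBit i) +
        arcPoly K i b (us.filter (·.testBit i)) * 256 ^ y =
      arcPoly K i (fun u => b u + if u.testBit i then y else 0) us := by
  induction us with
  | nil => simp [arcPoly]
  | cons u us ih =>
    simp only [arcPoly, List.map_cons, List.sum_cons] at ih ⊢
    rw [← ih]
    cases hu : u.testBit i <;> simp [hu, pow_add] <;> ring

theorem arcPoly_modEq (D i : ℕ) (b : ℕ → ℕ) (us : List ℕ) :
    arcPoly (D + 1) i b us ≡ lengthPoly b us [MOD D] := by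
  induction us with
  | nil => rfl
  | cons u us ih =>
    have hone : D + 1 ≡ 1 [MOD D] := by simp [Nat.ModEq]
    have hterm := (hone.pow (u % 2 ^ i)).mul_left (256 ^ b u)
    rw [one_pow, mul_one] at hterm
    exact hterm.add ih

theorem arcPoly_succ_mod {v i : ℕ} {b : ℕ → ℕ} {us : List ℕ} (hus : us.length < 256)
    (hb : ∀ u ∈ us, b u ≤ v) :
    arcPoly (256 ^ (v + 1) + 1) (i + 1) b us % (256 ^ (v + 1) + 1) ^ 2 ^ i =
      arcPoly (256 ^ (v + 1) + 1) i b (us.filter fun u => !u.testBit i) := by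
  rw [arcPoly_succ, Nat.add_mul_mod_self_left]
  exact Nat.mod_eq_of_lt <| arcPoly_lt ((List.length_filter_le _ _).trans_lt hus) fun u hu =>
    hb u (List.mem_of_mem_filter hu)

theorem arcPoly_succ_div {v i : ℕ} {b : ℕ → ℕ} {us : List ℕ} (hus : us.length < 256)
    (hb : ∀ u ∈ us, b u ≤ v) :
    arcPoly (256 ^ (v + 1) + 1) (i + 1) b us / (256 ^ (v + 1) + 1) ^ 2 ^ i =
      arcPoly (256 ^ (v + 1) + 1) i b (us.filter (·.testBit i)) := by
  rw [arcPoly_succ, Nat.add_mul_div_left _ _ (by positivity), Nat.div_eq_of_lt, zero_add]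
  exact arcPoly_lt ((List.length_filter_le _ _).trans_lt hus) fun u hu =>
    hb u (List.mem_of_mem_filter hu)

theorem lengthenArc_eq_true {check next : ℕ → ℕ → Bool} {F₀ F₁ rem y : ℕ} (hy : y ≤ rem)
    (hcheck : ∀ z, 0 < z → z ≤ y → check (rem - z) (F₀ + F₁ * 256 ^ z) = true)
    (hnext : next (rem - y) (F₀ + F₁ * 256 ^ y) = true) :
    lengthenArc check next F₀ rem F₁ = true := by
  induction rem generalizing F₁ y with
  | zero => rfl
  | succ rem ih =>
    change (next (rem + 1) (F₀ + F₁) || (check rem (F₀ + F₁ * 256) &&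
      lengthenArc check next F₀ rem (F₁ * 256))) = true
    rw [Bool.or_eq_true, Bool.and_eq_true]
    rcases y with _ | y
    · exact .inl (by simpa using hnext)
    have hshift (z : ℕ) : F₁ * 256 * 256 ^ z = F₁ * 256 ^ (z + 1) := by ring
    have hone : check rem (F₀ + F₁ * 256) = true := by
      simpa using hcheck 1 one_pos (by lia)
    refine .inr ⟨hone, ih (y := y) (by lia) (fun z _ hzy => ?_) ?_⟩
    · simpa only [hshift, Nat.add_sub_add_right] using hcheck (z + 1) z.succ_pos (by lia)
    · simpa only [hshift, Nat.add_sub_add_right] using hnext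

theorem arcSearch_eq_true {v : ℕ} {us : List ℕ} {len : ℕ → ℕ} {check : ℕ → ℕ → Bool}
    (hus : us.length < 256) (hlen : ∀ u ∈ us, len u ≤ v)
    (hcheck : ∀ (rem F : ℕ) (b : ℕ → ℕ), F ≡ lengthPoly b us [MOD 256 ^ (v + 1)] →
      (∀ u ∈ us, b u ≤ len u) → (∀ u ∈ us, len u ≤ b u + rem) → check rem F = true)
    (y : ℕ → ℕ) (i : ℕ) (b : ℕ → ℕ) (hb : ∀ u ∈ us, b u + maskLength y (i + 1) u = len u) :
    arcSearch check (256 ^ (v + 1) + 1) i (∑ j ∈ Finset.range (i + 1), y j)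
      (arcPoly (256 ^ (v + 1) + 1) (i + 1) b us) = true := by
  induction i generalizing b with
  | zero =>
    have hbv : ∀ u ∈ us, b u ≤ v := fun u hu => (le_of_add_le_left (hb u hu).le).trans (hlen u hu)
    have hmod := arcPoly_succ_mod (i := 0) hus hbv
    have hdiv := arcPoly_succ_div (i := 0) hus hbv
    rw [pow_zero, pow_one] at hmod hdiv
    change check 0 (_ % _ + _ / _ * 256 ^ _) = true
    rw [hmod, hdiv, arcPoly_filter_add]
    refine hcheck _ _ _ (arcPoly_modEq _ _ _ _) (fun u hu => ?_) fun u hu => ?_ <;>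
      simp [← hb u hu, maskLength]
  | succ i ih =>
    have hbv : ∀ u ∈ us, b u ≤ v := fun u hu => (le_of_add_le_left (hb u hu).le).trans (hlen u hu)
    change force (_ % _ ^ 2 ^ (i + 1)) (fun F₀ => force (_ / _ ^ 2 ^ (i + 1)) fun F₁ => _) = true
    rw [force_eq, force_eq, arcPoly_succ_mod hus hbv, arcPoly_succ_div hus hbv,
      Finset.sum_range_succ]
    refine lengthenArc_eq_true (y := y (i + 1)) (Nat.le_add_left _ _) (fun z _ hz => ?_) ?_
    · rw [arcPoly_filter_add]
      refine hcheck _ _ _ (arcPoly_modEq _ _ _ _) (fun u hu => ?_) fun u hu => ?_ <;>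
      · have hsum := maskLength_le_sum y (i + 1) u
        have hlenu := hb u hu
        rw [maskLength_succ] at hlenu
        split_ifs at hlenu ⊢ <;> lia
    · rw [arcPoly_filter_add, Nat.add_sub_cancel]
      refine ih _ fun u hu => ?_
      rw [← hb u hu, maskLength_succ y (i + 1)]
      ring

end ArcSearch

section TypeSearch

theorem labelCount_eq {k n u : ℕ} (hk : k ≤ 10) (hn : n ≤ 10) (hu : u < 2 ^ (k + n)) :
    labelCount k u = maskLength (fun _ => 1) (k + n) u := by
  change bitCount (u % 2 ^ k) + bitCount (u / 2 ^ k) = _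
  rw [bitCount_eq k hk _ (Nat.mod_lt _ (by positivity)), bitCount_eq n hn _ (Nat.div_lt_of_lt_mul
    (by rwa [← pow_add])), maskLength, Finset.sum_range_add]
  simp only [Nat.testBit_mod_two_pow, Nat.testBit_div_two_pow, add_comm k]
  congr 1
  exact Finset.sum_congr rfl fun j hj => by simp [Finset.mem_range.mp hj]

theorem cyclePoly_eq (K k : ℕ) (us : List ℕ) :
    cyclePoly K k us = arcPoly K k (labelCount k) us := by
  induction us with
  | nil => rfl
  | cons u us ih =>
    change cyclePoly K k us + _ = _
    rw [ih, add_comm]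
    rfl

theorem maskLength_eq_add {k n : ℕ} {x : ℕ → ℕ} (hx : ∀ j < k, 0 < x j)
    (hx1 : ∀ j < n, x (k + j) = 1) (u : ℕ) :
    maskLength (fun _ => 1) (k + n) u + maskLength (fun j => x j - 1) k u =
      maskLength x (k + n) u := by
  rw [maskLength, maskLength, maskLength, Finset.sum_range_add, Finset.sum_range_add,
    add_right_comm, ← Finset.sum_add_distrib]
  congr 1
  · refine Finset.sum_congr rfl fun j hj => ?_
    have := hx j (Finset.mem_range.mp hj)
    split_ifs <;> lia
  · exact Finset.sum_congr rfl fun j hj => by rw [hx1 j (Finset.mem_range.mp hj)]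

theorem sum_mul_countP_eq {us : List ℕ} {len : ℕ → ℕ} {s : Finset ℕ} (hs : ∀ u ∈ us, len u ∈ s)
    (g : ℕ → ℕ) :
    ∑ m ∈ s, g m * us.countP (len · = m) = (us.map fun u => g (len u)).sum := by
  induction us with
  | nil => simp
  | cons u us ih =>
    rw [List.forall_mem_cons] at hs
    simp only [List.countP_cons, mul_add, Finset.sum_add_distrib, ih hs.2, List.map_cons,
      List.sum_cons, decide_eq_true_eq, mul_ite, mul_one, mul_zero, Finset.sum_ite_eq, hs.1,
      if_true, add_comm]

theorem lengthPoly_modEq {us : List ℕ} {len : ℕ → ℕ} {v r : ℕ}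
    (hlen : ∀ u ∈ us, len u ∈ Finset.Icc 3 v)
    (hcount : ∀ m ∈ Finset.Icc 3 v, us.countP (len · = m) = r) :
    lengthPoly len us ≡ repunit (v + 1) * 256 ^ 3 * r [MOD 256 ^ (v + 1)] := by
  have hfilter : (Finset.range (v + 1)).filter (3 ≤ ·) = Finset.Icc 3 v := by
    ext m
    simp only [Finset.mem_filter, Finset.mem_range, Finset.mem_Icc]
    lia
  have hsum : lengthPoly len us = (∑ m ∈ Finset.Icc 3 v, 256 ^ m) * r := by
    rw [lengthPoly, ← sum_mul_countP_eq hlen (256 ^ ·), Finset.sum_mul]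
    exact Finset.sum_congr rfl fun m hm => by rw [hcount m hm]
  rw [hsum, ← hfilter, mul_comm (repunit _)]
  exact (pow_mul_repunit_modEq _ _).symm.mul_right _

theorem lengthSearch_eq_true {k n v r : ℕ} {us : List ℕ} {x : ℕ → ℕ} (hk : k ≤ 10) (hn : n ≤ 10)
    (hk0 : 0 < k) (hus : us.length < 128) (hmask : ∀ u ∈ us, u < 2 ^ (k + n))
    (hx : ∀ j < k, 0 < x j) (hx1 : ∀ j < n, x (k + j) = 1) (hv : ∑ j ∈ Finset.range k, x j = v)
    (hlen : ∀ u ∈ us, maskLength x (k + n) u ∈ Finset.Icc 3 v)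
    (hcount : ∀ m ∈ Finset.Icc 3 v, us.countP (maskLength x (k + n) · = m) = r) :
    lengthSearch k v r us = true := by
  have htarget : repunit (v + 1) * 256 ^ 3 * r * repunit (v + 1) % 256 ^ (v + 1) =
      lengthPoly (maskLength x (k + n)) us * repunit (v + 1) % 256 ^ (v + 1) :=
    ((lengthPoly_modEq hlen hcount).symm.mul_right _)
  have hrem : ∑ j ∈ Finset.range k, (x j - 1) = v - k := by
    rw [← hv, Finset.sum_tsub_distrib _ fun j hj => hx j (Finset.mem_range.mp hj)]
    simp
  have hb : ∀ u ∈ us, labelCount k u + maskLength (fun j => x j - 1) k u =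
      maskLength x (k + n) u := fun u hu => by
    rw [labelCount_eq hk hn (hmask u hu), maskLength_eq_add hx hx1]
  have hcheck (rem F : ℕ) (b : ℕ → ℕ) := lengthCheck_eq_true (v + 1) rem F _ b
    (maskLength x (k + n)) us hus (htarget := htarget)
  simp only [lengthSearch, force_eq, Bool.and_eq_true, Bool.or_eq_true]
  rw [cyclePoly_eq]
  refine ⟨hcheck _ _ _ (arcPoly_modEq _ _ _ _) (fun u hu => ?_) (fun u hu => ?_), .inr ?_⟩
  · rw [← hb u hu]
    exact Nat.le_add_right _ _
  · rw [← hb u hu]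
    exact Nat.add_le_add_left ((maskLength_le_sum _ _ _).trans hrem.le) _
  · obtain ⟨i, rfl⟩ := Nat.exists_eq_add_one.mpr hk0
    rw [Nat.sub_eq, ← hrem]
    exact arcSearch_eq_true (by lia) (fun u hu => (Finset.mem_Icc.mp (hlen u hu)).2) hcheck _ _ _ hb

theorem typeSearch_eq_true {k n v r : ℕ} {us : List ℕ} {x : ℕ → ℕ} (hk : k ≤ 10) (hn : n ≤ 10)
    (hk0 : 0 < k) (hus : us.length < 128) (hmask : ∀ u ∈ us, u < 2 ^ (k + n))
    (hx : ∀ j < k, 0 < x j) (hx1 : ∀ j < n, x (k + j) = 1) (hv : ∑ j ∈ Finset.range k, x j = v)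
    (hlen : ∀ u ∈ us, maskLength x (k + n) u ∈ Finset.Icc 3 v)
    (hcount : ∀ m ∈ Finset.Icc 3 v, us.countP (maskLength x (k + n) · = m) = r)
    (hv3 : 3 ≤ v) (hr : 3 ≤ r) :
    typeSearch k us = true := by
  obtain ⟨m, rfl⟩ := Nat.exists_eq_add_of_le' (show 2 ≤ v by lia)
  have hlength : us.length = m * r := by
    have hsum := sum_mul_countP_eq hlen fun _ => 1
    rw [Finset.sum_congr rfl fun m hm => by rw [hcount m hm]] at hsum
    simpa using hsum.symm
  have hkv : k ≤ m + 2 := by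
    rw [← hv]
    simpa using Finset.card_nsmul_le_sum (Finset.range k) x 1 fun j hj =>
      hx j (Finset.mem_range.mp hj)
  rw [typeSearch, force_eq, List.any_eq_true]
  refine ⟨m, List.mem_range.mpr (Nat.lt_succ_of_le ?_), ?_⟩
  · exact (Nat.le_div_iff_mul_le three_pos).mpr (hlength ▸ Nat.mul_le_mul_left m hr)
  rw [Bool.and_eq_true, Bool.and_eq_true]
  refine ⟨?_, Nat.ble_eq.mpr hkv, ?_⟩
  · change Nat.beq (us.length % m) 0 = true
    simp [hlength]
  · change lengthSearch k (m + 2) (us.length / m) us = true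
    rw [hlength, Nat.mul_div_cancel_left _ (by lia)]
    exact lengthSearch_eq_true hk hn hk0 hus hmask hx hx1 hv hlen hcount

end TypeSearch

/-! ### Soundness of the search for chords -/

section ChordSearch

/-- The mask of the fundamental cycle through the chord `d` with label `k + j`. -/
def chordMask (k j : ℕ) (d : ℕ × ℕ) : ℕ :=
  2 ^ d.2 - 2 ^ d.1 + 2 ^ (k + j)

/-- The masks of the even subgraphs of the union of a Hamiltonian cycle, divided into `k` arcs, and
a list of chords, of which the last one has label `k`. -/
def evens (k : ℕ) : List (ℕ × ℕ) → List ℕ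
  | [] => [0, 2 ^ k - 1]
  | d :: ds => ((evens k ds).map (· ^^^ chordMask k ds.length d)).reverse ++ evens k ds

/-- The masks of the cycles of the graph described at `evens`: an even subgraph which contains the
edge `d` is a cycle if it contains no cycle avoiding `d`. -/
def cycles (k : ℕ) : List (ℕ × ℕ) → List ℕ
  | [] => [2 ^ k - 1]
  | d :: ds => (((evens k ds).map (· ^^^ chordMask k ds.length d)).filter
      (containsNone (cycles k ds))).reverse ++ cycles k ds

theorem containsNone_eq_true_iff {us : List ℕ} {u : ℕ} :
    containsNone us u = true ↔ ∀ z ∈ us, z &&& u ≠ z := by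
  induction us with
  | nil => simp [containsNone]
  | cons z us ih =>
    rw [List.forall_mem_cons, ← ih]
    change Bool.rec (motive := fun _ => Bool) (containsNone us u) false (Nat.beq (z &&& u) z) =
      true ↔ _
    cases h : Nat.beq (z &&& u) z with
    | false => exact (and_iff_right (Nat.ne_of_beq_eq_false h)).symm
    | true => simp [Nat.eq_of_beq_eq_true h]

theorem extend_eq (w : ℕ) (cycles₀ : List ℕ) (next : List ℕ → List ℕ → Bool) (us es cs : List ℕ) :
    extend w cycles₀ next us es cs = next ((us.map (· ^^^ w)).reverse ++ es)
      (((us.map (· ^^^ w)).filter (containsNone cycles₀)).reverse ++ cs) := by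
  induction us generalizing es cs with
  | nil => rfl
  | cons u us ih =>
    rw [extend, force_eq]
    change Bool.rec (motive := fun _ => Bool) (extend w cycles₀ next us ((u ^^^ w) :: es) cs)
      (extend w cycles₀ next us ((u ^^^ w) :: es) ((u ^^^ w) :: cs))
      (containsNone cycles₀ (u ^^^ w)) = _
    cases h : containsNone cycles₀ (u ^^^ w) <;> simp [h, ih]

theorem addChord_eq (k : ℕ) (d : ℕ × ℕ) (ds : List (ℕ × ℕ)) (next : List ℕ → List ℕ → Bool) :
    addChord k ds.length d (evens k ds) (cycles k ds) next =
      next (evens k (d :: ds)) (cycles k (d :: ds)) := by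
  rw [addChord, force_eq, extend_eq]
  rfl

theorem two_pow_add_two_pow {a b : ℕ} (hab : a < b) : 2 ^ a + 2 ^ b = 2 ^ b ||| 2 ^ a := by
  rw [add_comm]
  simpa using Nat.two_pow_add_eq_or_of_lt (Nat.pow_lt_pow_right one_lt_two hab) 1

theorem testBit_or_chord {a b : ℕ} (hab : a < b) (cov p : ℕ) :
    (cov ||| (2 ^ a + 2 ^ b)).testBit p = true ↔ cov.testBit p = true ∨ p = a ∨ p = b := by
  rw [two_pow_add_two_pow hab, Nat.testBit_or, Nat.testBit_or, Nat.testBit_two_pow,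
    Nat.testBit_two_pow]
  simp only [Bool.or_eq_true, decide_eq_true_eq]
  tauto

theorem or_chord_lt {a b k cov : ℕ} (hab : a < b) (hbk : b < k) (hcov : cov < 2 ^ k) :
    cov ||| (2 ^ a + 2 ^ b) < 2 ^ k := by
  have hlt {i : ℕ} (hi : i < k) : 2 ^ i < 2 ^ k := Nat.pow_lt_pow_right one_lt_two hi
  rw [two_pow_add_two_pow hab]
  exact Nat.or_lt_two_pow hcov (Nat.or_lt_two_pow (hlt hbk) (hlt (hab.trans hbk)))

theorem succ_mod_two_pow_eq_zero {cov a : ℕ} (h : ∀ p < a, cov.testBit p = true) :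
    (cov + 1) % 2 ^ a = 0 := by
  have hmod : cov % 2 ^ a = 2 ^ a - 1 := Nat.eq_of_testBit_eq fun p => by
    rw [Nat.testBit_mod_two_pow, Nat.testBit_two_pow_sub_one]
    by_cases hp : p < a <;> simp [hp, h]
  have hpos := Nat.two_pow_pos a
  rw [Nat.add_mod, hmod]
  rcases a with _ | a
  · simp
  · rw [Nat.mod_eq_of_lt (Nat.one_lt_two_pow a.succ_ne_zero), Nat.sub_add_cancel hpos,
      Nat.mod_self]

theorem card_le_two_mul_length {s : Finset ℕ} {M : List (ℕ × ℕ)}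
    (h : ∀ p ∈ s, ∃ d ∈ M, p = d.1 ∨ p = d.2) : s.card ≤ 2 * M.length := by
  have hsub : s ⊆ (M.flatMap fun d => [d.1, d.2]).toFinset := fun p hp => by simpa using h p hp
  have hcard := (Finset.card_le_card hsub).trans (List.toFinset_card_le _)
  simpa [mul_comm] using hcard

theorem sub_bitCount_le {k cov : ℕ} (hk : k ≤ 10) (hcov : cov < 2 ^ k) {M : List (ℕ × ℕ)}
    (h : ∀ p < k, cov.testBit p = true ∨ ∃ d ∈ M, p = d.1 ∨ p = d.2) :
    k - bitCount cov ≤ 2 * M.length := by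
  have hcard : ((Finset.range k).filter (¬cov.testBit · = true)).card ≤ 2 * M.length :=
    card_le_two_mul_length fun p hp => by
      rw [Finset.mem_filter, Finset.mem_range] at hp
      exact (h p hp.1).resolve_left hp.2
  have hsplit := Finset.card_filter_add_card_filter_not (s := Finset.range k) (cov.testBit · = true)
  rw [Finset.card_range] at hsplit
  rw [bitCount_eq k hk cov hcov, ← Finset.card_filter]
  lia

theorem chordSearch_eq_true {k : ℕ} (hk : k ≤ 10) (C : List (ℕ × ℕ))
    (hC : ∀ d ∈ C, d.1 < d.2 ∧ d.2 < k) (hsorted : C.Pairwise (·.1 ≤ ·.1)) (M L : List (ℕ × ℕ))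
    (hM : M.Sublist C) (cov : ℕ) (hcov : cov < 2 ^ k)
    (hcover : ∀ p < k, cov.testBit p = true ∨ ∃ d ∈ M, p = d.1 ∨ p = d.2)
    (htype : typeSearch k (cycles k (M.reverse ++ L)) = true) :
    chordSearch k C M.length L.length cov (evens k L) (cycles k L) = true := by
  induction C generalizing M L cov with
  | nil =>
    rw [List.sublist_nil.mp hM] at htype ⊢
    simpa [chordSearch] using htype
  | cons d C ih =>
    rcases M with _ | ⟨e, M⟩
    · simpa [chordSearch] using htype
    rw [List.forall_mem_cons] at hC
    rw [List.pairwise_cons] at hsorted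
    have hfst : ∀ e' ∈ e :: M, d.1 ≤ e'.1 ∧ e'.1 < e'.2 := fun e' he' => by
      rcases List.mem_cons.mp (hM.subset he') with rfl | he'
      · exact ⟨le_rfl, hC.1.1⟩
      · exact ⟨hsorted.1 _ he', (hC.2 _ he').1⟩
    have hprefix : ∀ p < d.1, cov.testBit p = true := fun p hp =>
      (hcover p (by lia)).resolve_right fun ⟨e', he', h⟩ => by have := hfst e' he'; lia
    rw [List.length_cons, chordSearch, Bool.and_eq_true, Bool.or_eq_true]
    refine ⟨Nat.beq_eq.mpr (succ_mod_two_pow_eq_zero hprefix), ?_⟩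
    cases hM with
    | cons _ hM => exact .inr (ih hC.2 hsorted.2 _ _ hM _ hcov hcover htype)
    | cons_cons _ hM =>
      have hcover' : ∀ p < k, (cov ||| (2 ^ d.1 + 2 ^ d.2)).testBit p = true ∨
          ∃ d ∈ M, p = d.1 ∨ p = d.2 := fun p hp => by
        rw [testBit_or_chord hC.1.1, or_assoc]
        exact (hcover p hp).imp_right (List.exists_mem_cons_iff _ _ _).mp
      have hcov' := or_chord_lt hC.1.1 hC.1.2 hcov
      rw [force_eq, addChord_eq, Bool.and_eq_true]
      refine .inl ⟨Nat.ble_eq.mpr ?_, ih hC.2 hsorted.2 M (d :: L) hM _ hcov' hcover' ?_⟩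
      · exact (sub_bitCount_le hk hcov' hcover').trans_eq (mul_comm _ _)
      · simpa using htype

theorem mem_candidates {k s : ℕ} {d : ℕ × ℕ} :
    d ∈ candidates k s ↔ d.1 < k ∧ d.2 < k ∧ d.1 + s ≤ d.2 ∧ d.2 - d.1 + s ≤ k ∧ d ≠ (0, s) := by
  obtain ⟨a, b⟩ := d
  rw [candidates, List.mem_filter, List.pair_mem_product, List.mem_range, List.mem_range, and_assoc]
  simp [Nat.ble_eq, and_assoc, ← Bool.not_eq_true, Nat.beq_eq, imp_iff_not_or]

theorem pairwise_candidates (k s : ℕ) : (candidates k s).Pairwise (·.1 ≤ ·.1) := by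
  refine List.Pairwise.filter _ ?_
  rw [List.product, List.pairwise_flatMap]
  refine ⟨fun a _ => ?_, List.pairwise_le_range.imp ?_⟩
  · exact List.pairwise_map.mpr (List.pairwise_of_forall fun _ _ => le_rfl)
  · simp +contextual

theorem nodup_candidates (k s : ℕ) : (candidates k s).Nodup :=
  (List.nodup_range.product List.nodup_range).filter _

theorem search_eq_true {k s : ℕ} {M : List (ℕ × ℕ)} (hk : k ≤ 10) (hs : 0 < s) (hsk : s < k)
    (hM : M.Sublist (candidates k s)) (hcover : ∀ p < k, ∃ d ∈ (0, s) :: M, p = d.1 ∨ p = d.2)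
    (htype : typeSearch k (cycles k (M.reverse ++ [(0, s)])) = true) :
    search M.length k = true := by
  have hcov : 1 + 2 ^ s = 0 ||| (2 ^ 0 + 2 ^ s) := (Nat.zero_or _).symm
  have hC : ∀ d ∈ candidates k s, d.1 < d.2 ∧ d.2 < k := fun d hd => by
    rw [mem_candidates] at hd
    lia
  rw [search, List.any_eq_true]
  refine ⟨s, List.mem_range.mpr hsk, ?_⟩
  rw [Bool.and_eq_true, force_eq]
  refine ⟨by simp [← Bool.not_eq_true, Nat.beq_eq, hs.ne'], (addChord_eq k (0, s) [] _).trans ?_⟩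
  refine chordSearch_eq_true hk _ hC (pairwise_candidates k s) M [(0, s)] hM _ ?_ ?_ htype
  · exact hcov ▸ or_chord_lt hs hsk (by positivity)
  · intro p hp
    exact hcov ▸ ((List.exists_mem_cons_iff _ _ _).mp (hcover p hp)).imp_left fun h =>
      (testBit_or_chord hs 0 p).mpr (.inr h)

end ChordSearch

/-! ### Cycles as minimal even edge sets -/

section Circuit

variable {V : Type*}

open scoped symmDiff

/-- The degrees modulo two of the vertices in the graph with edge set `E`, which may not contain
loops. -/
noncomputable def boundary (E : Set (Sym2 V)) (x : V) : ZMod 2 :=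
  ((E ∩ {e | x ∈ e}).ncard : ZMod 2)

/-- A minimal nonempty set of edges with all degrees even, that is, the edge set of a cycle. -/
def IsCircuit (E : Set (Sym2 V)) : Prop :=
  Minimal (fun E => E.Nonempty ∧ boundary E = 0) E

theorem boundary_empty : boundary (∅ : Set (Sym2 V)) = 0 := by
  ext x
  simp [boundary]

theorem boundary_edge [DecidableEq V] {a b : V} (hab : a ≠ b) :
    boundary {s(a, b)} = Pi.single a 1 + Pi.single b 1 := by
  ext x
  rw [boundary, Pi.add_apply, Pi.single_apply, Pi.single_apply]
  by_cases hx : x ∈ s(a, b)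
  · rw [Set.inter_eq_left.mpr (Set.singleton_subset_iff.mpr (show s(a, b) ∈ {e | x ∈ e} from hx)),
      Set.ncard_singleton]
    rcases Sym2.mem_iff.mp hx with rfl | rfl <;> simp [hab, hab.symm]
  · rw [Set.singleton_inter_eq_empty.mpr (show s(a, b) ∉ {e | x ∈ e} from hx), Set.ncard_empty]
    rw [Sym2.mem_iff, not_or] at hx
    simp [hx.1, hx.2]

theorem boundary_edgeSet_eq_zero_iff (F : SimpleGraph V) :
    boundary F.edgeSet = 0 ↔ ∀ x, Even (F.neighborSet x).ncard := by
  classical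
  have hcard (x : V) : (F.edgeSet ∩ {e | x ∈ e}).ncard = (F.neighborSet x).ncard :=
    Nat.card_congr (F.incidenceSetEquivNeighborSet x)
  simp only [funext_iff, boundary, hcard, Pi.zero_apply, ZMod.natCast_eq_zero_iff_even]

variable [Finite V]

theorem boundary_symmDiff (E F : Set (Sym2 V)) : boundary (E ∆ F) = boundary E + boundary F := by
  ext x
  have hcard (A B : Set (Sym2 V)) : (A ∆ B).ncard + 2 * (A ∩ B).ncard = A.ncard + B.ncard := by
    have hunion := Set.ncard_union_add_ncard_inter A B
    have hdisj := Set.ncard_union_eq (disjoint_symmDiff_inf A B)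
    change (A ∆ B ⊔ A ⊓ B).ncard = _ at hdisj
    rw [symmDiff_sup_inf] at hdisj
    change (A ∪ B).ncard = (A ∆ B).ncard + (A ∩ B).ncard at hdisj
    lia
  have hcast := congrArg (Nat.cast (R := ZMod 2)) (hcard (E ∩ {e | x ∈ e}) (F ∩ {e | x ∈ e}))
  rw [← Set.inter_symmDiff_distrib_right] at hcast
  push_cast at hcast
  rwa [show (2 : ZMod 2) = 0 from rfl, zero_mul, add_zero] at hcast

theorem exists_isCircuit_subset {E : Set (Sym2 V)} (hne : E.Nonempty) (hE : boundary E = 0) :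
    ∃ Z ⊆ E, IsCircuit Z := by
  obtain ⟨Z, hZE, hZ⟩ := exists_minimal_le_of_wellFoundedLT
    (fun E : Set (Sym2 V) => E.Nonempty ∧ boundary E = 0) E ⟨hne, hE⟩
  exact ⟨Z, hZE, hZ⟩

theorem isCircuit_iff_of_mem {E : Set (Sym2 V)} {e : Sym2 V} (hE : boundary E = 0) (he : e ∈ E) :
    IsCircuit E ↔ ∀ Z ⊆ E, IsCircuit Z → e ∈ Z := by
  refine ⟨fun hC Z hZE hZ => hC.le_of_le hZ.1 hZE he, fun h => ⟨⟨⟨e, he⟩, hE⟩, fun F hF hFE => ?_⟩⟩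
  have heF : e ∈ F := by
    obtain ⟨Z, hZF, hZ⟩ := exists_isCircuit_subset hF.1 hF.2
    exact hZF (h Z (hZF.trans hFE) hZ)
  by_contra hEF
  have hdiff : E \ F = E ∆ F := (symmDiff_of_ge hFE).symm
  obtain ⟨Z, hZ, hZC⟩ := exists_isCircuit_subset (E := E \ F) (Set.sdiff_nonempty.mpr hEF)
    (by rw [hdiff, boundary_symmDiff, hE, hF.2, add_zero])
  exact (hZ (h Z (hZ.trans Set.sdiff_subset) hZC)).2 heF

end Circuit

section CycleSubgraph

variable {V : Type*} {G : SimpleGraph V} {H : G.Subgraph} {k : ℕ}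

theorem ncard_neighborSet_cycleGraph (hk : 3 ≤ k) (i : Fin k) :
    ((cycleGraph k).neighborSet i).ncard = 2 := by
  obtain ⟨n, rfl⟩ := Nat.exists_eq_add_of_le' hk
  rw [← Nat.card_coe_set_eq, Nat.card_eq_fintype_card, card_neighborSet_eq_degree,
    cycleGraph_degree_three_le]

theorem ncard_neighborSet_of_iso_cycleGraph (hk : 3 ≤ k) (φ : H.coe ≃g cycleGraph k) {x : V}
    (hx : x ∈ H.verts) : (H.neighborSet x).ncard = 2 := by
  rw [← ncard_neighborSet_cycleGraph hk (φ ⟨x, hx⟩)]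
  exact Nat.card_congr ((H.coeNeighborSetEquiv ⟨x, hx⟩).symm.trans (φ.mapNeighborSet ⟨x, hx⟩))

theorem ncard_verts_of_iso_cycleGraph (φ : H.coe ≃g cycleGraph k) : H.verts.ncard = k := by
  rw [← Nat.card_coe_set_eq, Nat.card_congr φ.toEquiv, Nat.card_fin]

theorem neighborSet_eq_empty_of_notMem_verts {x : V} (hx : x ∉ H.verts) : H.neighborSet x = ∅ :=
  Set.eq_empty_of_forall_notMem fun _ h => hx (H.edge_vert h)

theorem boundary_edgeSet_of_iso_cycleGraph (hk : 3 ≤ k) (φ : H.coe ≃g cycleGraph k) :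
    boundary H.edgeSet = 0 := by
  refine (boundary_edgeSet_eq_zero_iff H.spanningCoe).mpr fun x => ?_
  change Even (H.neighborSet x).ncard
  by_cases hx : x ∈ H.verts
  · exact ncard_neighborSet_of_iso_cycleGraph hk φ hx ▸ even_two
  · simp [neighborSet_eq_empty_of_notMem_verts hx]

theorem mem_verts_iff_of_iso_cycleGraph (hk : 3 ≤ k) (φ : H.coe ≃g cycleGraph k) {x : V} :
    x ∈ H.verts ↔ ∃ y, H.Adj x y := by
  refine ⟨fun hx => Set.nonempty_of_ncard_ne_zero (s := H.neighborSet x) ?_,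
    fun ⟨_, h⟩ => H.edge_vert h⟩
  simp [ncard_neighborSet_of_iso_cycleGraph hk φ hx]

theorem spanningCoe_le_of_even {F : SimpleGraph V} (hk : 3 ≤ k) (φ : H.coe ≃g cycleGraph k)
    (hFH : F ≤ H.spanningCoe) (hF : ∀ x, Even (F.neighborSet x).ncard) {a b : V}
    (hab : F.Adj a b) : H.spanningCoe ≤ F := by
  have hlocal {x y : V} (hxy : F.Adj x y) {z : V} (hz : H.Adj x z) : F.Adj x z := by
    have htwo := ncard_neighborSet_of_iso_cycleGraph hk φ (H.edge_vert hz)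
    have hfin : (H.neighborSet x).Finite := Set.finite_of_ncard_ne_zero (by simp [htwo])
    have hsub : F.neighborSet x ⊆ H.neighborSet x := fun w hw => hFH hw
    have hpos : 0 < (F.neighborSet x).ncard := (Set.ncard_pos (hfin.subset hsub)).mpr ⟨y, hxy⟩
    have heq : F.neighborSet x = H.neighborSet x := by
      refine Set.eq_of_subset_of_ncard_le hsub ?_ hfin
      have := (hF x).two_dvd
      lia
    exact (heq.symm ▸ hz : z ∈ F.neighborSet x)
  have hwalk {x y : H.verts} (w : H.coe.Walk x y) (hx : ∃ z, F.Adj x z) : ∃ z, F.Adj y z := by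
    induction w with
    | nil => exact hx
    | cons hxy _ ih => exact ih ⟨_, (hlocal hx.choose_spec hxy).symm⟩
  intro x y hxy
  obtain ⟨w⟩ := φ.preconnected_iff.mpr cycleGraph_preconnected ⟨a, H.edge_vert (hFH hab)⟩
    ⟨x, H.edge_vert hxy⟩
  exact hlocal (hwalk w ⟨b, hab⟩).choose_spec hxy

theorem isCircuit_edgeSet_of_iso_cycleGraph (hk : 3 ≤ k) (φ : H.coe ≃g cycleGraph k) :
    IsCircuit H.edgeSet := by
  have hne : H.edgeSet.Nonempty := by
    obtain ⟨y, hy⟩ := (mem_verts_iff_of_iso_cycleGraph hk φ).mp (φ.symm ⟨0, by lia⟩).2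
    exact ⟨_, H.mem_edgeSet.mpr hy⟩
  refine ⟨⟨hne, boundary_edgeSet_of_iso_cycleGraph hk φ⟩, fun E ⟨⟨e, he⟩, hE⟩ hEH => ?_⟩
  have hedges : (fromEdgeSet E).edgeSet = E := by
    rw [edgeSet_fromEdgeSet, sdiff_eq_left, Set.disjoint_left]
    exact fun e he => H.spanningCoe.not_isDiag_of_mem_edgeSet (hEH he)
  have hle : fromEdgeSet E ≤ H.spanningCoe := by
    rw [← edgeSet_subset_edgeSet, hedges]
    exact hEH
  rw [← hedges, boundary_edgeSet_eq_zero_iff] at hE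
  induction e with
  | h a b =>
    rw [← hedges] at he
    have hge := edgeSet_mono (spanningCoe_le_of_even hk φ hle hE he)
    rwa [hedges] at hge

variable [Finite V]

theorem ncard_edgeSet_of_iso_cycleGraph (hk : 3 ≤ k) (φ : H.coe ≃g cycleGraph k) :
    H.edgeSet.ncard = k := by
  classical
  cases nonempty_fintype V
  have hdegree (x : V) : H.spanningCoe.degree x = if x ∈ H.verts then 2 else 0 := by
    rw [← card_neighborSet_eq_degree, ← Nat.card_eq_fintype_card]
    change (H.neighborSet x).ncard = _
    split_ifs with hx
    · exact ncard_neighborSet_of_iso_cycleGraph hk φ hx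
    · rw [neighborSet_eq_empty_of_notMem_verts hx, Set.ncard_empty]
  have hsum := H.spanningCoe.sum_degrees_eq_twice_card_edges
  rw [Finset.sum_congr rfl fun x _ => hdegree x, ← Finset.sum_filter, Finset.sum_const, smul_eq_mul,
    ← Set.ncard_coe_finset, ← Set.ncard_coe_finset, coe_edgeFinset, Finset.coe_filter_univ,
    Set.ofPred_mem_eq, ncard_verts_of_iso_cycleGraph φ] at hsum
  change _ = 2 * H.edgeSet.ncard at hsum
  lia

theorem exists_ncard_neighborSet_eq_one {F : SimpleGraph V} (hF : F.IsAcyclic) {a b : V}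
    (hab : F.Adj a b) : ∃ x, (F.neighborSet x).ncard = 1 := by
  have : Nonempty V := ⟨a⟩
  obtain ⟨u, v, p, hp, hmax⟩ := Walk.exists_isPath_forall_isPath_length_le_length F
  have hnil : ¬p.Nil := by
    have := hmax _ _ _ (Path.singleton hab).2
    rw [← Walk.length_eq_zero_iff]
    simp only [Path.singleton_coe, Walk.length_cons, Walk.length_nil] at this
    lia
  refine ⟨u, Set.ncard_eq_one.mpr ⟨p.snd, Set.eq_singleton_iff_unique_mem.mpr
    ⟨p.adj_snd hnil, fun w hadj => hF.eq_snd_of_adj_start hp hadj ?_⟩⟩⟩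
  by_contra hw
  have := hmax _ _ _ (hp.cons (h := hadj.symm) hw)
  rw [Walk.length_cons] at this
  lia

theorem exists_iso_cycleGraph_of_isCircuit {E : Set (Sym2 V)} (hEG : E ⊆ G.edgeSet)
    (hE : IsCircuit E) :
    ∃ k ≥ 3, ∃ H : G.Subgraph, Nonempty (H.coe ≃g cycleGraph k) ∧ H.edgeSet = E := by
  have hedges : (fromEdgeSet E).edgeSet = E := by
    rw [edgeSet_fromEdgeSet, sdiff_eq_left, Set.disjoint_left]
    exact fun e he => G.not_isDiag_of_mem_edgeSet (hEG he)
  have hle : fromEdgeSet E ≤ G := by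
    rwa [← edgeSet_subset_edgeSet, hedges]
  have hcyclic : ¬(fromEdgeSet E).IsAcyclic := fun hacyclic => by
    obtain ⟨⟨⟨e, he⟩, heven⟩, -⟩ := hE
    rw [← hedges, boundary_edgeSet_eq_zero_iff] at heven
    induction e with
    | h a b =>
      rw [← hedges] at he
      obtain ⟨x, hx⟩ := exists_ncard_neighborSet_eq_one hacyclic he
      exact Nat.not_even_one (hx ▸ heven x)
  rw [isAcyclic_iff_free_cycleGraph] at hcyclic
  push Not at hcyclic
  obtain ⟨k, hk, ⟨f⟩⟩ := hcyclic
  let g : Copy (cycleGraph k) G := (Copy.ofLE _ G hle).comp f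
  have hsub : g.toSubgraph.edgeSet ⊆ E := by
    intro e
    induction e with
    | h a b =>
      rw [Subgraph.mem_edgeSet, Copy.toSubgraph, Subgraph.map_adj]
      rintro ⟨i, j, hij, rfl, rfl⟩
      exact hedges ▸ f.toHom.map_adj hij
  have hg := isCircuit_edgeSet_of_iso_cycleGraph hk g.isoToSubgraph.symm
  exact ⟨k, hk, g.toSubgraph, ⟨g.isoToSubgraph.symm⟩, hsub.antisymm (hE.le_of_le hg.prop hsub)⟩

theorem cycleCount_eq_ncard_isCircuit (G : SimpleGraph V) (hk : 3 ≤ k) :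
    cycleCount G k = {E | E ⊆ G.edgeSet ∧ IsCircuit E ∧ E.ncard = k}.ncard := by
  refine Set.ncard_congr (fun H _ => H.edgeSet) (fun H ⟨φ⟩ => ?_) (fun H K ⟨φ⟩ ⟨ψ⟩ h => ?_)
    fun E ⟨hEG, hE, hcard⟩ => ?_
  · exact ⟨H.edgeSet_subset, isCircuit_edgeSet_of_iso_cycleGraph hk φ,
      ncard_edgeSet_of_iso_cycleGraph hk φ⟩
  · have hadj : H.Adj = K.Adj := by
      ext x y
      rw [← Subgraph.mem_edgeSet, h, Subgraph.mem_edgeSet]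
    refine Subgraph.ext (Set.ext fun x => ?_) hadj
    rw [mem_verts_iff_of_iso_cycleGraph hk φ, mem_verts_iff_of_iso_cycleGraph hk ψ, hadj]
  · obtain ⟨l, hl, H, ⟨φ⟩, rfl⟩ := exists_iso_cycleGraph_of_isCircuit hEG hE
    obtain rfl : l = k := (ncard_edgeSet_of_iso_cycleGraph hl φ).symm.trans hcard
    exact ⟨H, ⟨φ⟩, rfl⟩

theorem ncard_mem_Icc_of_isCircuit {E : Set (Sym2 V)} (hEG : E ⊆ G.edgeSet) (hE : IsCircuit E) :
    E.ncard ∈ Finset.Icc 3 (Nat.card V) := by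
  obtain ⟨k, hk, H, ⟨φ⟩, rfl⟩ := exists_iso_cycleGraph_of_isCircuit hEG hE
  rw [Finset.mem_Icc, ncard_edgeSet_of_iso_cycleGraph hk φ]
  exact ⟨hk, ncard_verts_of_iso_cycleGraph φ ▸ Set.ncard_le_card H.verts⟩

end CycleSubgraph

/-! ### Masks and sets of edges -/

section Masks

theorem lt_of_testBit {i n u : ℕ} (hu : u < 2 ^ n) (h : u.testBit i = true) : i < n :=
  (Nat.pow_lt_pow_iff_right one_lt_two).mp ((Nat.ge_two_pow_of_testBit h).trans_lt hu)

theorem testBit_chordMask {k j : ℕ} {d : ℕ × ℕ} (hd : d.1 < d.2) (hdk : d.2 ≤ k) (i : ℕ) :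
    (chordMask k j d).testBit i = true ↔ (d.1 ≤ i ∧ i < d.2) ∨ i = k + j := by
  have harcs : 2 ^ d.2 - 2 ^ d.1 = 2 ^ d.1 * (2 ^ (d.2 - d.1) - 1) := by
    rw [Nat.mul_sub, ← pow_add, Nat.add_sub_cancel' hd.le, mul_one]
  have hlt : 2 ^ d.2 - 2 ^ d.1 < 2 ^ (k + j) :=
    (Nat.sub_lt (by positivity) (by positivity)).trans_le (Nat.pow_le_pow_right two_pos (by lia))
  have hor := Nat.two_pow_add_eq_or_of_lt hlt 1
  rw [mul_one] at hor
  rw [chordMask, add_comm, hor, Nat.testBit_or, harcs, Nat.testBit_two_pow,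
    Nat.testBit_two_pow_mul, Nat.testBit_two_pow_sub_one]
  simp only [Bool.or_eq_true, Bool.and_eq_true, decide_eq_true_eq]
  lia

theorem chordMask_lt {k j : ℕ} {d : ℕ × ℕ} (hd : d.1 < d.2) (hdk : d.2 ≤ k) :
    chordMask k j d < 2 ^ (k + (j + 1)) :=
  Nat.lt_pow_two_of_testBit _ fun i hi => by
    rw [← Bool.not_eq_true, testBit_chordMask hd hdk]
    lia

theorem length_evens (k : ℕ) (ds : List (ℕ × ℕ)) : (evens k ds).length = 2 ^ (ds.length + 1) := by
  induction ds with
  | nil => rfl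
  | cons d ds ih => simp [evens, ih, pow_succ, mul_two]

theorem cycles_sublist_evens (k : ℕ) (ds : List (ℕ × ℕ)) :
    (cycles k ds).Sublist (evens k ds) := by
  induction ds with
  | nil => simp [cycles, evens]
  | cons d ds ih => exact List.filter_sublist.reverse.append ih

theorem mem_evens_cons {k u : ℕ} {d : ℕ × ℕ} {ds : List (ℕ × ℕ)} :
    u ∈ evens k (d :: ds) ↔
      (∃ w ∈ evens k ds, w ^^^ chordMask k ds.length d = u) ∨ u ∈ evens k ds := by
  rw [evens, List.mem_append, List.mem_reverse, List.mem_map]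

theorem mem_cycles_cons {k u : ℕ} {d : ℕ × ℕ} {ds : List (ℕ × ℕ)} :
    u ∈ cycles k (d :: ds) ↔ ((∃ w ∈ evens k ds, w ^^^ chordMask k ds.length d = u) ∧
      ∀ z ∈ cycles k ds, z &&& u ≠ z) ∨ u ∈ cycles k ds := by
  rw [cycles, List.mem_append, List.mem_reverse, List.mem_filter, List.mem_map,
    containsNone_eq_true_iff]

variable {k : ℕ} {ds : List (ℕ × ℕ)}

theorem lt_of_mem_evens (hds : ∀ d ∈ ds, d.1 < d.2 ∧ d.2 ≤ k) {u : ℕ} (hu : u ∈ evens k ds) :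
    u < 2 ^ (k + ds.length) := by
  induction ds generalizing u with
  | nil =>
    rcases List.mem_pair.mp hu with rfl | rfl <;> simp
  | cons d ds ih =>
    obtain ⟨hd, hds⟩ := List.forall_mem_cons.mp hds
    have hle : 2 ^ (k + ds.length) ≤ 2 ^ (k + (ds.length + 1)) :=
      Nat.pow_le_pow_right two_pos (by lia)
    rcases mem_evens_cons.mp hu with ⟨w, hw, rfl⟩ | hu
    · exact Nat.xor_lt_two_pow ((ih hds hw).trans_le hle) (chordMask_lt hd.1 hd.2)
    · exact (ih hds hu).trans_le hle

theorem testBit_xor_chordMask (hds : ∀ d ∈ ds, d.1 < d.2 ∧ d.2 ≤ k) {d : ℕ × ℕ} (hd : d.1 < d.2)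
    (hdk : d.2 ≤ k) {w : ℕ} (hw : w ∈ evens k ds) :
    (w ^^^ chordMask k ds.length d).testBit (k + ds.length) = true := by
  rw [Nat.testBit_xor, Nat.testBit_lt_two_pow (lt_of_mem_evens hds hw), Bool.false_xor,
    testBit_chordMask hd hdk]
  exact .inr rfl

theorem nodup_evens (hk : 0 < k) (hds : ∀ d ∈ ds, d.1 < d.2 ∧ d.2 ≤ k) : (evens k ds).Nodup := by
  induction ds with
  | nil =>
    have := Nat.one_lt_two_pow hk.ne'
    simp only [evens, List.nodup_cons, List.mem_singleton, List.not_mem_nil, not_false_iff,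
      List.nodup_nil, and_true]
    lia
  | cons d ds ih =>
    obtain ⟨⟨hd, hdk⟩, hds⟩ := List.forall_mem_cons.mp hds
    have hinj : Function.Injective (· ^^^ chordMask k ds.length d) := fun u w h => by
      simpa [Nat.xor_assoc] using congrArg (· ^^^ chordMask k ds.length d) h
    refine List.Nodup.append (List.nodup_reverse.mpr ((ih hds).map hinj)) (ih hds) ?_
    intro u hu hu'
    obtain ⟨w, hw, rfl⟩ := List.mem_map.mp (List.mem_reverse.mp hu)
    have hbit := testBit_xor_chordMask hds hd hdk hw
    rw [Nat.testBit_lt_two_pow (lt_of_mem_evens hds hu')] at hbit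
    exact Bool.false_ne_true hbit

end Masks

section MaskSet

variable {V : Type*}

open scoped symmDiff

/-- The edges in `S` whose labels are the positions of the ones in the mask `u`. -/
def maskSet (S : Set (Sym2 V)) (lab : Sym2 V → ℕ) (u : ℕ) : Set (Sym2 V) :=
  {e ∈ S | u.testBit (lab e) = true}

variable {S : Set (Sym2 V)} {lab : Sym2 V → ℕ} {n u z : ℕ}

theorem maskSet_xor (u w : ℕ) : maskSet S lab (u ^^^ w) = maskSet S lab u ∆ maskSet S lab w := by
  ext e
  simp only [maskSet, Nat.testBit_xor, Bool.xor_iff_ne, Set.mem_symmDiff, Set.mem_ofPred]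
  cases u.testBit (lab e) <;> cases w.testBit (lab e) <;> simp

theorem and_eq_left_iff_maskSet_subset (hz : z < 2 ^ n) (hlab : ∀ j < n, ∃ e ∈ S, lab e = j) :
    z &&& u = z ↔ maskSet S lab z ⊆ maskSet S lab u := by
  constructor
  · rintro h e ⟨heS, he⟩
    rw [← h, Nat.testBit_and, Bool.and_eq_true] at he
    exact ⟨heS, he.2⟩
  · intro h
    refine Nat.eq_of_testBit_eq fun j => ?_
    rw [Nat.testBit_and, Bool.and_eq_left_iff_imp]
    intro hj
    obtain ⟨e, heS, rfl⟩ := hlab j (lt_of_testBit hz hj)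
    exact (h ⟨heS, hj⟩).2

theorem maskSet_injOn (hlab : ∀ j < n, ∃ e ∈ S, lab e = j) :
    Set.InjOn (maskSet S lab) {u | u < 2 ^ n} := fun u hu z hz h => by
  rw [← (and_eq_left_iff_maskSet_subset hu hlab).mpr h.subset, Nat.and_comm,
    (and_eq_left_iff_maskSet_subset hz hlab).mpr h.superset]

theorem ncard_maskSet (hS : S.Finite) (hu : u < 2 ^ n) :
    (maskSet S lab u).ncard = maskLength (fun j => {e ∈ S | lab e = j}.ncard) n u := by
  classical
  have hfin : (maskSet S lab u).Finite := hS.subset (Set.sep_subset _ _)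
  rw [Set.ncard_eq_toFinset_card _ hfin, Finset.card_eq_sum_card_fiberwise (f := lab)
    (t := Finset.range n) fun e he => by simpa using lt_of_testBit hu (hfin.mem_toFinset.mp he).2]
  refine Finset.sum_congr rfl fun j _ => ?_
  rw [← Set.ncard_coe_finset]
  split_ifs with hj
  · congr 1
    ext e
    simp only [maskSet, Finset.coe_filter, Set.Finite.mem_toFinset, Set.mem_ofPred]
    grind
  · rw [Set.ncard_eq_zero]
    ext e
    simp only [maskSet, Finset.coe_filter, Set.Finite.mem_toFinset, Set.mem_ofPred]
    grind

end MaskSet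

section ChordLabelling

open scoped symmDiff

variable {V : Type*} {S : Set (Sym2 V)} {lab : Sym2 V → ℕ} {k : ℕ} {L : List (ℕ × ℕ)}

/-- The function `lab` labels the edges of a Hamiltonian cycle by the arcs `0, …, k - 1` on which
they lie, and the chords in `L`, read from its end, by `k, k + 1, …`. A chord is given by the points
of division which it joins, so that it closes up the arcs between them to a cycle. -/
inductive ChordLabelling (S : Set (Sym2 V)) (lab : Sym2 V → ℕ) (k : ℕ) : List (ℕ × ℕ) → Prop
  | nil (harcs : ∀ j < k, ∃ e ∈ S, lab e = j) (hcycle : IsCircuit (maskSet S lab (2 ^ k - 1))) :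
    ChordLabelling S lab k []
  | cons {d : ℕ × ℕ} {L : List (ℕ × ℕ)} (hL : ChordLabelling S lab k L) (hd : d.1 < d.2)
    (hdk : d.2 ≤ k) (hchord : ∃ e, {e ∈ S | lab e = k + L.length} = {e})
    (hcycle : boundary (maskSet S lab (chordMask k L.length d)) = 0) :
    ChordLabelling S lab k (d :: L)

namespace ChordLabelling

theorem lt_and_le (h : ChordLabelling S lab k L) : ∀ d ∈ L, d.1 < d.2 ∧ d.2 ≤ k := by
  induction h with
  | nil => exact fun _ hd => (List.not_mem_nil hd).elim
  | cons _ hd hdk _ _ ih => exact List.forall_mem_cons.mpr ⟨⟨hd, hdk⟩, ih⟩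

theorem isCircuit (h : ChordLabelling S lab k L) : IsCircuit (maskSet S lab (2 ^ k - 1)) := by
  induction h with
  | nil _ hcycle => exact hcycle
  | cons _ _ _ _ _ ih => exact ih

theorem exists_lab_eq (h : ChordLabelling S lab k L) :
    ∀ j < k + L.length, ∃ e ∈ S, lab e = j := by
  induction h with
  | nil harcs _ => exact harcs
  | @cons d L _ _ _ hchord _ ih =>
    intro j hj
    rcases (Nat.lt_succ_iff.mp hj).lt_or_eq with hj | rfl
    · exact ih j hj
    · obtain ⟨e, he⟩ := hchord
      exact ⟨e, he.symm.subset rfl⟩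

theorem exists_eq_singleton (h : ChordLabelling S lab k L) :
    ∀ j < L.length, ∃ e, {e ∈ S | lab e = k + j} = {e} := by
  induction h with
  | nil => exact fun _ hj => (Nat.not_lt_zero _ hj).elim
  | @cons d L _ _ _ hchord _ ih =>
    intro j hj
    rcases (Nat.lt_succ_iff.mp hj).lt_or_eq with hj | rfl
    · exact ih j hj
    · exact hchord

variable [Finite V]

theorem boundary_maskSet (h : ChordLabelling S lab k L) {u : ℕ} (hu : u ∈ evens k L) :
    boundary (maskSet S lab u) = 0 := by
  induction h generalizing u with
  | nil _ hcycle =>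
    rcases List.mem_pair.mp hu with rfl | rfl
    · simpa [maskSet] using boundary_empty
    · exact hcycle.prop.2
  | cons _ _ _ _ hcycle ih =>
    rcases mem_evens_cons.mp hu with ⟨w, hw, rfl⟩ | hu
    · rw [maskSet_xor, boundary_symmDiff, ih hw, hcycle, add_zero]
    · exact ih hu

theorem exists_maskSet_eq (h : ChordLabelling S lab k L) {E : Set (Sym2 V)} (hES : E ⊆ S)
    (hlab : ∀ e ∈ E, lab e < k + L.length) (hE : boundary E = 0) :
    ∃ u ∈ evens k L, maskSet S lab u = E := by
  induction h generalizing E with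
  | nil _ hcycle =>
    rcases E.eq_empty_or_nonempty with rfl | hne
    · exact ⟨0, by simp [evens], by simp [maskSet]⟩
    · have hsub : E ⊆ maskSet S lab (2 ^ k - 1) := fun e he =>
        ⟨hES he, by simpa [Nat.testBit_two_pow_sub_one] using hlab e he⟩
      exact ⟨2 ^ k - 1, by simp [evens], (hcycle.eq_of_le ⟨hne, hE⟩ hsub).symm⟩
  | @cons d L _ hd hdk hchord hcycle ih =>
    obtain ⟨e₀, he₀⟩ := hchord
    have hn (e) (he : e ∈ S) (hne : e ≠ e₀) (hle : lab e < k + (L.length + 1)) :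
        lab e < k + L.length :=
      (Nat.lt_succ_iff.mp hle).lt_of_ne fun h => hne (he₀.subset ⟨he, h⟩)
    by_cases heE : e₀ ∈ E
    · have he₀c : e₀ ∈ maskSet S lab (chordMask k L.length d) :=
        ⟨hES heE, (testBit_chordMask hd hdk _).mpr (.inr (he₀.symm.subset rfl).2)⟩
      have hsub : E ∆ maskSet S lab (chordMask k L.length d) ⊆ S :=
        Set.symmDiff_subset_union.trans (Set.union_subset hES (Set.sep_subset _ _))
      have hlt : ∀ e ∈ E ∆ maskSet S lab (chordMask k L.length d), lab e < k + L.length := by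
        rintro e (⟨he, hec⟩ | ⟨⟨heS, hec⟩, he⟩)
        · exact hn e (hES he) (fun h => hec (h ▸ he₀c)) (hlab e he)
        · exact hn e heS (fun h => he (h ▸ heE)) (lt_of_testBit (chordMask_lt hd hdk) hec)
      obtain ⟨w, hw, hwE⟩ := ih hsub hlt (by rw [boundary_symmDiff, hE, hcycle, add_zero])
      refine ⟨_, mem_evens_cons.mpr (.inl ⟨w, hw, rfl⟩), ?_⟩
      rw [maskSet_xor, hwE, symmDiff_symmDiff_cancel_right]
    · obtain ⟨u, hu, huE⟩ :=
        ih hES (fun e he => hn e (hES he) (fun h => heE (h ▸ he)) (hlab e he)) hE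
      exact ⟨u, mem_evens_cons.mpr (.inr hu), huE⟩

theorem mem_cycles_iff (h : ChordLabelling S lab k L) {u : ℕ} :
    u ∈ cycles k L ↔ u ∈ evens k L ∧ IsCircuit (maskSet S lab u) := by
  induction h generalizing u with
  | nil _ hcycle =>
    rw [cycles, evens, List.mem_singleton, List.mem_pair]
    refine ⟨fun hu => ⟨.inr hu, hu ▸ hcycle⟩, fun ⟨hu, hC⟩ => hu.resolve_left ?_⟩
    rintro rfl
    simpa [maskSet] using hC.prop.1
  | @cons d L hL hd hdk hchord hcycle ih =>
    rw [mem_cycles_cons, mem_evens_cons, or_and_right, ← ih]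
    refine or_congr_left (and_congr_right fun ⟨w, hw, hwu⟩ => ?_)
    have hcons := hL.cons hd hdk hchord hcycle
    obtain ⟨e₀, he₀⟩ := hchord
    obtain ⟨he₀S, hlab₀⟩ := he₀.symm.subset rfl
    have he₀u : e₀ ∈ maskSet S lab u :=
      ⟨he₀S, hlab₀ ▸ hwu ▸ testBit_xor_chordMask hL.lt_and_le hd hdk hw⟩
    have hu := mem_evens_cons.mpr (.inl ⟨w, hw, hwu⟩)
    rw [isCircuit_iff_of_mem (hcons.boundary_maskSet hu) he₀u]
    constructor
    · intro hz Z hZu hZ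
      by_contra heZ
      have hlt : ∀ e ∈ Z, lab e < k + L.length := fun e he => by
        have hlt := lt_of_testBit (lt_of_mem_evens hcons.lt_and_le hu) (hZu he).2
        exact (Nat.lt_succ_iff.mp hlt).lt_of_ne
          fun h => heZ (he₀.subset ⟨(hZu he).1, h⟩ ▸ he)
      obtain ⟨z, hzL, rfl⟩ :=
        hL.exists_maskSet_eq (hZu.trans (Set.sep_subset _ _)) hlt hZ.prop.2
      exact hz z (ih.mpr ⟨hzL, hZ⟩) ((and_eq_left_iff_maskSet_subset
        (lt_of_mem_evens hL.lt_and_le hzL) hL.exists_lab_eq).mpr hZu)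
    · intro hZ z hz hzu
      obtain ⟨hzL, hzC⟩ := ih.mp hz
      have hzlt := lt_of_mem_evens hL.lt_and_le hzL
      have he₀z := hZ _ ((and_eq_left_iff_maskSet_subset hzlt hL.exists_lab_eq).mp hzu) hzC
      exact (lt_of_testBit hzlt he₀z.2).ne hlab₀

theorem countP_cycles (h : ChordLabelling S lab k L) (hk : 0 < k)
    (hlab : ∀ e ∈ S, lab e < k + L.length) (p : Set (Sym2 V) → Prop)
    [DecidablePred fun u => p (maskSet S lab u)] :
    (cycles k L).countP (fun u => p (maskSet S lab u)) =
      {E | E ⊆ S ∧ IsCircuit E ∧ p E}.ncard := by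
  have hnodup := (nodup_evens hk h.lt_and_le).sublist (cycles_sublist_evens k L)
  have hinj := maskSet_injOn h.exists_lab_eq
  rw [List.countP_eq_length_filter, ← List.toFinset_card_of_nodup (hnodup.filter _),
    ← Set.ncard_coe_finset, ← (hinj.mono fun u hu => ?_).ncard_image]
  · congr 1
    ext E
    simp only [Set.mem_image, List.coe_toFinset, Set.mem_ofPred, List.mem_filter,
      decide_eq_true_eq, h.mem_cycles_iff]
    constructor
    · rintro ⟨u, ⟨⟨-, hu⟩, hpu⟩, rfl⟩
      exact ⟨Set.sep_subset _ _, hu, hpu⟩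
    · rintro ⟨hES, hE, hpE⟩
      obtain ⟨u, hu, rfl⟩ := h.exists_maskSet_eq hES (fun e he => hlab e (hES he)) hE.prop.2
      exact ⟨u, ⟨⟨hu, hE⟩, hpE⟩, rfl⟩
  · rw [List.coe_toFinset] at hu
    exact lt_of_mem_evens h.lt_and_le ((cycles_sublist_evens k L).subset (List.mem_filter.mp hu).1)

theorem typeSearch_eq_true (h : ChordLabelling S lab k L) (hk : 0 < k) (hk10 : k ≤ 10)
    (hL : L.length ≤ 5) (hlab : ∀ e ∈ S, lab e < k + L.length) {v r : ℕ} (hr : 3 ≤ r)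
    (hv : (maskSet S lab (2 ^ k - 1)).ncard = v)
    (hcard : ∀ E ⊆ S, IsCircuit E → E.ncard ∈ Finset.Icc 3 v)
    (hcount : ∀ m ∈ Finset.Icc 3 v, {E | E ⊆ S ∧ IsCircuit E ∧ E.ncard = m}.ncard = r) :
    typeSearch k (cycles k L) = true := by
  have hlt {u} (hu : u ∈ cycles k L) : u < 2 ^ (k + L.length) :=
    lt_of_mem_evens h.lt_and_le ((cycles_sublist_evens k L).subset hu)
  have hlen {u} (hu : u ∈ cycles k L) := ncard_maskSet (lab := lab) S.toFinite (hlt hu)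
  refine RPancyclic.typeSearch_eq_true (n := L.length) (v := v) (r := r)
    (x := fun j => {e ∈ S | lab e = j}.ncard) hk10 (by lia) hk ?_ (fun u => hlt) ?_ ?_ ?_ ?_ ?_ ?_
    hr
  · refine (cycles_sublist_evens k L).length_le.trans_lt ?_
    rw [length_evens]
    exact Nat.pow_lt_pow_right one_lt_two (by lia : L.length + 1 < 7)
  · intro j hj
    exact (Set.ncard_pos (Set.toFinite _)).mpr (h.exists_lab_eq j (by lia))
  · intro j hj
    exact Set.ncard_eq_one.mpr (h.exists_eq_singleton j hj)
  · rw [← hv, ncard_maskSet S.toFinite (Nat.sub_lt (Nat.two_pow_pos k) one_pos)]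
    refine Finset.sum_congr rfl fun j hj => ?_
    rw [Nat.testBit_two_pow_sub_one, if_pos (by simpa using hj)]
  · intro u hu
    rw [← hlen hu]
    exact hcard _ (Set.sep_subset _ _) (h.mem_cycles_iff.mp hu).2
  · intro m hm
    rw [← hcount m hm, ← h.countP_cycles hk hlab (·.ncard = m)]
    exact List.countP_congr fun u hu => by rw [hlen hu]
  · have := hcard _ (Set.sep_subset _ _) h.isCircuit
    rw [← maskSet, hv, Finset.mem_Icc] at this
    exact this.1

end ChordLabelling

end ChordLabelling

/-! ### Hamiltonian cycles and their chords -/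

section HamiltonianCycle

open scoped symmDiff

theorem image_Iio_of_periodic {α : Type*} {g : ℕ → α} {n : ℕ} (hg : Function.Periodic g n)
    (hn : 0 < n) : g '' Set.Iio n = Set.range g := by
  refine (Set.image_subset_range _ _).antisymm ?_
  rintro _ ⟨t, rfl⟩
  exact ⟨t % n, Nat.mod_lt t hn, hg.map_mod_nat t⟩

theorem injOn_Iio_of_periodic {α : Type*} {g : ℕ → α} {n : ℕ} (hg : Function.Periodic g n)
    (hn : 0 < n) (hcard : (Set.range g).ncard = n) : Set.InjOn g (Set.Iio n) :=
  Set.injOn_of_ncard_image_eq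
    (by rw [image_Iio_of_periodic hg hn, hcard, Set.ncard_eq_toFinset_card', Set.toFinset_Iio,
      Nat.card_Iio])
    (Set.finite_Iio n)

theorem range_add_left_of_periodic {α : Type*} {g : ℕ → α} {n : ℕ} (hg : Function.Periodic g n)
    (hn : 0 < n) (A : ℕ) : Set.range (fun t => g (A + t)) = Set.range g := by
  refine (Set.range_comp_subset_range (A + ·) g).antisymm ?_
  rintro _ ⟨t, rfl⟩
  refine ⟨t + (A * n - A), ?_⟩
  have hle := Nat.le_mul_of_pos_right A hn
  change g (A + (t + (A * n - A))) = g t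
  rw [show A + (t + (A * n - A)) = t + A * n by lia]
  exact hg.nat_mul A t

variable {V : Type*} {G : SimpleGraph V} {f : ℕ → V}

/-- The edge from the vertex `f t` to its successor. -/
def cycleEdge (f : ℕ → V) (t : ℕ) : Sym2 V :=
  s(f t, f (t + 1))

/-- The sequence `f` runs periodically through the vertices of a Hamiltonian cycle of `G`. -/
structure IsHamiltonianCycle (G : SimpleGraph V) (f : ℕ → V) : Prop where
  periodic : Function.Periodic f (Nat.card V)
  surjective : Function.Surjective f
  subset_edgeSet : Set.range (cycleEdge f) ⊆ G.edgeSet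
  isCircuit : IsCircuit (Set.range (cycleEdge f))
  ncard_eq : (Set.range (cycleEdge f)).ncard = Nat.card V

/-- The edges of `G` which do not lie on the cycle `f`. -/
def chords (G : SimpleGraph V) (f : ℕ → V) : Set (Sym2 V) :=
  G.edgeSet \ Set.range (cycleEdge f)

/-- The vertex `f t` is an end of a chord. -/
def IsEnd (G : SimpleGraph V) (f : ℕ → V) (t : ℕ) : Prop :=
  ∃ w, s(f t, w) ∈ chords G f

theorem add_self_eq_zero (b : V → ZMod 2) : b + b = 0 :=
  funext fun x => CharTwo.add_self_eq_zero (b x)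

namespace IsHamiltonianCycle

theorem periodic_cycleEdge (hf : IsHamiltonianCycle G f) :
    Function.Periodic (cycleEdge f) (Nat.card V) := fun t => by
  rw [cycleEdge, add_right_comm, hf.periodic, hf.periodic, cycleEdge]

variable [Finite V]

theorem card_pos (hf : IsHamiltonianCycle G f) : 0 < Nat.card V := by
  rw [← hf.ncard_eq, Set.ncard_pos]
  exact Set.range_nonempty _

theorem range_cycleEdge_add (hf : IsHamiltonianCycle G f) (A : ℕ) :
    Set.range (cycleEdge fun t => f (A + t)) = Set.range (cycleEdge f) :=
  range_add_left_of_periodic hf.periodic_cycleEdge hf.card_pos A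

theorem rotate (hf : IsHamiltonianCycle G f) (A : ℕ) :
    IsHamiltonianCycle G fun t => f (A + t) where
  periodic t := (congrArg f (add_assoc A t _)).symm.trans (hf.periodic (A + t))
  surjective := by
    rw [← Set.range_eq_univ, range_add_left_of_periodic hf.periodic hf.card_pos,
      hf.surjective.range_eq]
  subset_edgeSet := hf.range_cycleEdge_add A ▸ hf.subset_edgeSet
  isCircuit := hf.range_cycleEdge_add A ▸ hf.isCircuit
  ncard_eq := hf.range_cycleEdge_add A ▸ hf.ncard_eq

theorem chords_rotate (hf : IsHamiltonianCycle G f) (A : ℕ) :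
    chords G (fun t => f (A + t)) = chords G f := by
  rw [chords, hf.range_cycleEdge_add, chords]

theorem injOn (hf : IsHamiltonianCycle G f) : Set.InjOn f (Set.Iio (Nat.card V)) :=
  injOn_Iio_of_periodic hf.periodic hf.card_pos
    (by rw [hf.surjective.range_eq, Set.ncard_univ])

theorem injOn_cycleEdge (hf : IsHamiltonianCycle G f) :
    Set.InjOn (cycleEdge f) (Set.Iio (Nat.card V)) :=
  injOn_Iio_of_periodic hf.periodic_cycleEdge hf.card_pos hf.ncard_eq

theorem exists_eq (hf : IsHamiltonianCycle G f) (x : V) : ∃ t < Nat.card V, f t = x := by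
  have hx : x ∈ f '' Set.Iio (Nat.card V) := by
    rw [image_Iio_of_periodic hf.periodic hf.card_pos, hf.surjective.range_eq]
    trivial
  exact hx

theorem boundary_path [DecidableEq V] (hf : IsHamiltonianCycle G f) {A B : ℕ} (hAB : A ≤ B)
    (hB : B ≤ Nat.card V) :
    boundary (cycleEdge f '' Set.Ico A B) = Pi.single (f A) 1 + Pi.single (f B) 1 := by
  induction B, hAB using Nat.le_induction with
  | base =>
    rw [Set.Ico_self, Set.image_empty, boundary_empty, add_self_eq_zero]
  | succ B hAB ih =>
    have hdisj : Disjoint {cycleEdge f B} (cycleEdge f '' Set.Ico A B) := by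
      rw [Set.disjoint_singleton_left]
      rintro ⟨t, ht, htB⟩
      exact ht.2.ne (hf.injOn_cycleEdge (ht.2.trans hB) hB htB)
    have hinsert : insert (cycleEdge f B) (cycleEdge f '' Set.Ico A B) =
        {cycleEdge f B} ∆ (cycleEdge f '' Set.Ico A B) := hdisj.symmDiff_eq_sup.symm
    have hne : f B ≠ f (B + 1) := G.ne_of_adj (hf.subset_edgeSet ⟨B, rfl⟩)
    rw [← Set.insert_Ico_right_eq_Ico_add_one hAB, Set.image_insert_eq, hinsert,
      boundary_symmDiff, ih (Nat.le_of_succ_le hB), cycleEdge, boundary_edge hne, add_comm,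
      add_assoc, ← add_assoc (Pi.single (f B) 1), add_self_eq_zero, zero_add]

end IsHamiltonianCycle

theorem exists_isHamiltonianCycle [Finite V] (hV : 3 ≤ Nat.card V)
    (h : 0 < cycleCount G (Nat.card V)) : ∃ f, IsHamiltonianCycle G f := by
  obtain ⟨H, ⟨φ⟩⟩ := Set.nonempty_of_ncard_ne_zero h.ne'
  obtain ⟨n, hn⟩ := Nat.exists_eq_add_of_le' (show 2 ≤ Nat.card V by lia)
  have hverts : H.verts = Set.univ := by
    apply Set.eq_of_subset_of_ncard_le (Set.subset_univ _)
    rw [Set.ncard_univ, ncard_verts_of_iso_cycleGraph φ]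
  rw [hn] at φ hV
  let f (t : ℕ) : V := φ.symm (Fin.ofNat (n + 2) t)
  have hsucc (t : ℕ) : Fin.ofNat (n + 2) (t + 1) = Fin.ofNat (n + 2) t + 1 := by
    ext
    simp [Fin.ofNat, Fin.val_add]
  have hval {x : V} (hx : x ∈ H.verts) : f (φ ⟨x, hx⟩) = x := by
    simp only [f, Fin.ofNat_val_eq_self, RelIso.symm_apply_apply]
  have hrange : Set.range (cycleEdge f) = H.edgeSet := by
    refine Set.Subset.antisymm ?_ ?_
    · rintro _ ⟨t, rfl⟩
      refine φ.symm.map_adj_iff.mpr (cycleGraph_adj.mpr (.inr ?_))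
      rw [hsucc, add_sub_cancel_left]
    · have hmem {x y : V} (hx : x ∈ H.verts) (hy : y ∈ H.verts) (h : φ ⟨y, hy⟩ - φ ⟨x, hx⟩ = 1) :
          s(x, y) ∈ Set.range (cycleEdge f) := by
        refine ⟨φ ⟨x, hx⟩, ?_⟩
        have hy' : f (φ ⟨x, hx⟩ + 1) = y := by
          rw [← hval hy]
          simp only [f, hsucc, Fin.ofNat_val_eq_self, ← h, add_sub_cancel]
        rw [cycleEdge, hval, hy']
      intro e
      induction e with
      | h x y =>
        intro hxy
        have hadj : H.coe.Adj ⟨x, H.edge_vert hxy⟩ ⟨y, H.edge_vert hxy.symm⟩ := hxy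
        rcases cycleGraph_adj.mp (φ.map_adj_iff.mpr hadj) with h | h
        · exact Sym2.eq_swap ▸ hmem _ _ h
        · exact hmem _ _ h
  refine ⟨f, fun t => ?_, fun x => ⟨φ ⟨x, hverts ▸ trivial⟩, hval _⟩, ?_, ?_, ?_⟩
  · simp [f, hn, Fin.ofNat]
  · exact hrange ▸ H.edgeSet_subset
  · exact hrange ▸ isCircuit_edgeSet_of_iso_cycleGraph hV φ
  · rw [hrange, hn, ncard_edgeSet_of_iso_cycleGraph hV φ]

end HamiltonianCycle

/-! ### The ends of the chords -/

section Ends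

variable {V : Type*} {G : SimpleGraph V} {f : ℕ → V} {a b B i j t : ℕ} {e : Sym2 V}

open Classical in
/-- The number of chord ends among the vertices `f 0, …, f (t - 1)`. -/
noncomputable def numEnds (G : SimpleGraph V) (f : ℕ → V) (t : ℕ) : ℕ :=
  Nat.count (IsEnd G f) t

/-- The position on the cycle of its `i`-th chord end, counted from `0`. -/
noncomputable def endAt (G : SimpleGraph V) (f : ℕ → V) (i : ℕ) : ℕ :=
  Nat.nth (IsEnd G f) i

theorem numEnds_zero : numEnds G f 0 = 0 := by
  classical exact Nat.count_zero _

theorem numEnds_mono : Monotone (numEnds G f) := by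
  classical exact Nat.count_monotone _

theorem numEnds_lt_numEnds (ha : IsEnd G f a) (hab : a < b) : numEnds G f a < numEnds G f b := by
  classical exact Nat.count_strict_mono ha hab

theorem endAt_numEnds (ha : IsEnd G f a) : endAt G f (numEnds G f a) = a := by
  classical exact Nat.nth_count ha

namespace IsHamiltonianCycle

variable [Finite V]

theorem numEnds_add (hf : IsHamiltonianCycle G f) (A t : ℕ) :
    numEnds G f (A + t) = numEnds G f A + numEnds G (fun t => f (A + t)) t := by
  classical
  have hrotate : IsEnd G (fun t => f (A + t)) = fun t => IsEnd G f (A + t) :=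
    funext fun t => by rw [IsEnd, hf.chords_rotate, IsEnd]
  simp only [numEnds, Nat.count_add, hrotate]

theorem numEnds_add_card (hf : IsHamiltonianCycle G f) (t : ℕ) :
    numEnds G f (t + Nat.card V) = numEnds G f t + numEnds G f (Nat.card V) := by
  have hrotate : (fun t => f (Nat.card V + t)) = f :=
    funext fun t => by rw [add_comm, hf.periodic]
  rw [add_comm, hf.numEnds_add, hrotate, add_comm]

theorem exists_lt_of_mem_chords (hf : IsHamiltonianCycle G f) (he : e ∈ chords G f) :
    ∃ a b, a < b ∧ b < Nat.card V ∧ s(f a, f b) = e := by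
  induction e with
  | h x y =>
    obtain ⟨a, ha, rfl⟩ := hf.exists_eq x
    obtain ⟨b, hb, rfl⟩ := hf.exists_eq y
    rcases lt_trichotomy a b with hab | rfl | hba
    · exact ⟨a, b, hab, hb, rfl⟩
    · exact (G.loopless.irrefl _ he.1).elim
    · exact ⟨b, a, hba, ha, Sym2.eq_swap⟩

end IsHamiltonianCycle

/-- The chord from `f 0` to `f B` cuts off the fewest chord ends among all chords. -/
structure IsShortestChord (G : SimpleGraph V) (f : ℕ → V) (B : ℕ) : Prop
    extends IsHamiltonianCycle G f where
  pos : 0 < B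
  lt_card : B < Nat.card V
  mem_chords : s(f 0, f B) ∈ chords G f
  numEnds_le {a b : ℕ} : a < b → b < a + Nat.card V → s(f a, f b) ∈ chords G f →
    numEnds G f a + numEnds G f B ≤ numEnds G f b

theorem exists_isShortestChord [Finite V] (hf : IsHamiltonianCycle G f)
    (hne : (chords G f).Nonempty) : ∃ f B, IsShortestChord G f B := by
  let IsChord (q : (ℕ → V) × ℕ) : Prop := IsHamiltonianCycle G q.1 ∧ 0 < q.2 ∧
    q.2 < Nat.card V ∧ s(q.1 0, q.1 q.2) ∈ chords G q.1
  have hrotate {f : ℕ → V} {a b : ℕ} (hf : IsHamiltonianCycle G f) (hab : a < b)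
      (hb : b < a + Nat.card V) (he : s(f a, f b) ∈ chords G f) :
      IsChord (fun t => f (a + t), b - a) := by
    refine ⟨hf.rotate a, by lia, by lia, ?_⟩
    rw [hf.chords_rotate]
    simpa only [add_zero, Nat.add_sub_cancel' hab.le] using he
  have hexists : {q | IsChord q}.Nonempty := by
    obtain ⟨e, he⟩ := hne
    obtain ⟨a, b, hab, hb, rfl⟩ := hf.exists_lt_of_mem_chords he
    exact ⟨_, hrotate hf hab (by lia) he⟩
  obtain ⟨⟨g, B⟩, ⟨hg, hB, hBv, hmem⟩, hmin⟩ :=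
    exists_minimalFor_of_wellFoundedLT IsChord (fun q => numEnds G q.1 q.2) hexists
  refine ⟨g, B, hg, hB, hBv, hmem, fun {a b} hab hb he => ?_⟩
  rw [← Nat.add_sub_cancel' hab.le, hg.numEnds_add]
  refine Nat.add_le_add_left (le_of_not_gt fun hlt => ?_) _
  exact hlt.not_ge (hmin (hrotate hg hab hb he) hlt.le)

/-- The potential chord between the chord ends with the indices `d.1` and `d.2`. -/
noncomputable def chordAt (G : SimpleGraph V) (f : ℕ → V) (d : ℕ × ℕ) : Sym2 V :=
  s(f (endAt G f d.1), f (endAt G f d.2))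

open Classical in
/-- The chords other than the one joining the ends `0` and `s`, as pairs of indices of ends, in the
order in which the search enumerates them. -/
noncomputable def laterChords (G : SimpleGraph V) (f : ℕ → V) (s : ℕ) : List (ℕ × ℕ) :=
  (candidates (numEnds G f (Nat.card V)) s).filter fun d => chordAt G f d ∈ chords G f

namespace IsShortestChord

theorem isEnd_zero (h : IsShortestChord G f B) : IsEnd G f 0 :=
  ⟨_, h.mem_chords⟩

theorem isEnd (h : IsShortestChord G f B) : IsEnd G f B :=
  ⟨_, Sym2.eq_swap ▸ h.mem_chords⟩

theorem numEnds_pos (h : IsShortestChord G f B) (ht : 0 < t) : 0 < numEnds G f t :=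
  numEnds_zero (G := G) (f := f) ▸ numEnds_lt_numEnds h.isEnd_zero ht

theorem endAt_zero (h : IsShortestChord G f B) : endAt G f 0 = 0 :=
  Nat.nth_zero_of_zero h.isEnd_zero

theorem chordAt_zero (h : IsShortestChord G f B) :
    chordAt G f (0, numEnds G f B) = s(f 0, f B) := by
  rw [chordAt, h.endAt_zero, endAt_numEnds h.isEnd]

variable [Finite V]

theorem infinite_isEnd (h : IsShortestChord G f B) : {t | IsEnd G f t}.Infinite := by
  refine Set.infinite_of_forall_exists_gt fun n => ⟨(n + 1) * Nat.card V, ?_, ?_⟩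
  · have hzero : f ((n + 1) * Nat.card V) = f 0 := h.periodic.nat_mul_eq (n + 1)
    exact ⟨f B, hzero ▸ h.mem_chords⟩
  · exact Nat.le_mul_of_pos_right _ h.card_pos

theorem lt_numEnds_iff (h : IsShortestChord G f B) : i < numEnds G f t ↔ endAt G f i < t := by
  classical exact Nat.lt_nth_iff_count_lt h.infinite_isEnd

theorem numEnds_endAt (h : IsShortestChord G f B) (i : ℕ) : numEnds G f (endAt G f i) = i := by
  classical exact Nat.count_nth_of_infinite h.infinite_isEnd i

theorem isEnd_endAt (h : IsShortestChord G f B) (i : ℕ) : IsEnd G f (endAt G f i) :=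
  Nat.nth_mem_of_infinite h.infinite_isEnd i

theorem strictMono_endAt (h : IsShortestChord G f B) : StrictMono (endAt G f) :=
  Nat.nth_strictMono h.infinite_isEnd

theorem apply_endAt_inj (h : IsShortestChord G f B) (hi : i < numEnds G f (Nat.card V))
    (hj : j < numEnds G f (Nat.card V)) : f (endAt G f i) = f (endAt G f j) ↔ i = j :=
  ⟨fun hij => h.strictMono_endAt.injective
    (h.injOn (h.lt_numEnds_iff.mp hi) (h.lt_numEnds_iff.mp hj) hij), fun hij => hij ▸ rfl⟩

theorem exists_chordAt_eq (h : IsShortestChord G f B) (he : e ∈ chords G f) :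
    ∃ d : ℕ × ℕ, d.1 < d.2 ∧ d.2 < numEnds G f (Nat.card V) ∧ chordAt G f d = e := by
  obtain ⟨a, b, hab, hb, rfl⟩ := h.exists_lt_of_mem_chords he
  have ha : IsEnd G f a := ⟨_, he⟩
  have hb' : IsEnd G f b := ⟨_, Sym2.eq_swap ▸ he⟩
  refine ⟨(numEnds G f a, numEnds G f b), numEnds_lt_numEnds ha hab, numEnds_lt_numEnds hb' hb, ?_⟩
  rw [chordAt, endAt_numEnds ha, endAt_numEnds hb']

theorem mem_cons_laterChords (h : IsShortestChord G f B) {d : ℕ × ℕ} :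
    d ∈ (0, numEnds G f B) :: laterChords G f (numEnds G f B) ↔
      d.1 < d.2 ∧ d.2 < numEnds G f (Nat.card V) ∧ chordAt G f d ∈ chords G f := by
  classical
  have hpos := h.numEnds_pos h.pos
  have hlt := numEnds_lt_numEnds h.isEnd h.lt_card
  rw [List.mem_cons, laterChords, List.mem_filter, decide_eq_true_eq, mem_candidates]
  constructor
  · rintro (rfl | ⟨hd, hmem⟩)
    · exact ⟨hpos, hlt, h.chordAt_zero ▸ h.mem_chords⟩
    · exact ⟨by lia, hd.2.1, hmem⟩
  · rintro ⟨hd, hdk, hmem⟩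
    have h₂ := h.lt_numEnds_iff.mp hdk
    have h₁₂ := h.strictMono_endAt hd
    have hinner := h.numEnds_le h₁₂ (by lia) hmem
    have houter := h.numEnds_le (a := endAt G f d.2) (b := endAt G f d.1 + Nat.card V) (by lia)
      (by lia) (by rw [h.periodic, Sym2.eq_swap]; exact hmem)
    rw [h.numEnds_add_card] at houter
    rw [h.numEnds_endAt, h.numEnds_endAt] at hinner houter
    exact or_iff_not_imp_left.mpr fun hne => ⟨⟨by lia, hdk, hinner, by lia, hne⟩, hmem⟩

theorem nodup_map_chordAt (h : IsShortestChord G f B) :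
    (((0, numEnds G f B) :: laterChords G f (numEnds G f B)).map (chordAt G f)).Nodup := by
  have hnodup : ((0, numEnds G f B) :: laterChords G f (numEnds G f B)).Nodup :=
    List.nodup_cons.mpr ⟨fun hmem => (mem_candidates.mp (List.mem_filter.mp hmem).1).2.2.2.2 rfl,
      (nodup_candidates _ _).filter _⟩
  refine hnodup.map_on fun d hd d' hd' heq => ?_
  obtain ⟨hd, hdk, -⟩ := h.mem_cons_laterChords.mp hd
  obtain ⟨hd', hdk', -⟩ := h.mem_cons_laterChords.mp hd'
  rw [chordAt, chordAt, Sym2.eq_iff, h.apply_endAt_inj (by lia) (by lia),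
    h.apply_endAt_inj hdk hdk', h.apply_endAt_inj (by lia) hdk',
    h.apply_endAt_inj hdk (by lia)] at heq
  exact Prod.ext (by lia) (by lia)

theorem mem_map_chordAt (h : IsShortestChord G f B) :
    e ∈ ((0, numEnds G f B) :: laterChords G f (numEnds G f B)).map (chordAt G f) ↔
      e ∈ chords G f := by
  rw [List.mem_map]
  constructor
  · rintro ⟨d, hd, rfl⟩
    exact (h.mem_cons_laterChords.mp hd).2.2
  · intro he
    obtain ⟨d, hd, hdk, rfl⟩ := h.exists_chordAt_eq he
    exact ⟨d, h.mem_cons_laterChords.mpr ⟨hd, hdk, he⟩, rfl⟩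

theorem length_laterChords (h : IsShortestChord G f B) :
    (laterChords G f (numEnds G f B)).length + 1 = (chords G f).ncard := by
  classical
  rw [← List.length_cons (a := (0, numEnds G f B)), ← List.length_map (chordAt G f),
    ← List.toFinset_card_of_nodup h.nodup_map_chordAt, ← Set.ncard_coe_finset]
  congr 1
  ext e
  rw [List.coe_toFinset, Set.mem_ofPred_eq, h.mem_map_chordAt]

theorem exists_mem_cons_laterChords (h : IsShortestChord G f B)
    (hi : i < numEnds G f (Nat.card V)) :
    ∃ d ∈ (0, numEnds G f B) :: laterChords G f (numEnds G f B), i = d.1 ∨ i = d.2 := by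
  obtain ⟨w, hw⟩ := h.isEnd_endAt i
  obtain ⟨d, hd, hdk, heq⟩ := h.exists_chordAt_eq hw
  refine ⟨d, h.mem_cons_laterChords.mpr ⟨hd, hdk, heq ▸ hw⟩, ?_⟩
  have hmem : f (endAt G f i) ∈ chordAt G f d := heq ▸ Sym2.mem_mk_left _ _
  rwa [chordAt, Sym2.mem_iff, h.apply_endAt_inj hi (hd.trans hdk), h.apply_endAt_inj hi hdk] at hmem

end IsShortestChord

end Ends

section EdgeLabel

open scoped symmDiff

variable {V : Type*} {G : SimpleGraph V} {f : ℕ → V} {B i j t : ℕ} {e : Sym2 V}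

theorem ChordLabelling.reverse {S : Set (Sym2 V)} {lab : Sym2 V → ℕ} {k : ℕ}
    (hnil : ChordLabelling S lab k []) {R : List (ℕ × ℕ)}
    (hR : ∀ (j : ℕ) (hj : j < R.length), R[j].1 < R[j].2 ∧ R[j].2 ≤ k ∧
      (∃ e, {e ∈ S | lab e = k + j} = {e}) ∧ boundary (maskSet S lab (chordMask k j R[j])) = 0) :
    ChordLabelling S lab k R.reverse := by
  induction R using List.reverseRecOn with
  | nil => exact hnil
  | append_singleton R d ih =>
    rw [List.reverse_append, List.reverse_singleton, List.singleton_append]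
    have hlen : R.length < (R ++ [d]).length := by simp
    obtain ⟨hd, hdk, hchord, hcycle⟩ := hR R.length hlen
    rw [List.getElem_concat_length rfl] at hd hdk hcycle
    refine .cons (ih fun j hj => ?_) hd hdk ?_ ?_
    · have := hR j (hj.trans hlen)
      rwa [List.getElem_append_left hj] at this
    · rwa [List.length_reverse]
    · rwa [List.length_reverse]

open Classical in
/-- The label of an edge of `G`: for an edge of the cycle `f` the number of the arc between
successive chord ends on which it lies, for a chord its position in the list `R`, shifted by the
number of arcs. -/
noncomputable def edgeLabel (G : SimpleGraph V) (f : ℕ → V) (R : List (ℕ × ℕ)) (e : Sym2 V) : ℕ :=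
  if e ∈ chords G f then numEnds G f (Nat.card V) + (R.map (chordAt G f)).idxOf e
  else numEnds G f (Function.invFunOn (cycleEdge f) (Set.Iio (Nat.card V)) e + 1) - 1

variable {R : List (ℕ × ℕ)}

theorem cycleEdge_notMem_chords : cycleEdge f t ∉ chords G f :=
  fun h => h.2 ⟨t, rfl⟩

open Classical in
theorem edgeLabel_of_mem (he : e ∈ chords G f) :
    edgeLabel G f R e = numEnds G f (Nat.card V) + (R.map (chordAt G f)).idxOf e :=
  if_pos he

namespace IsShortestChord

variable [Finite V]

theorem exists_cycleEdge_eq (h : IsShortestChord G f B) (he : e ∈ G.edgeSet)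
    (hch : e ∉ chords G f) : ∃ t < Nat.card V, cycleEdge f t = e := by
  have hrange : e ∈ Set.range (cycleEdge f) := not_not.mp fun hr => hch ⟨he, hr⟩
  rwa [← image_Iio_of_periodic h.periodic_cycleEdge h.card_pos] at hrange

theorem edgeLabel_cycleEdge (h : IsShortestChord G f B) (ht : t < Nat.card V) :
    edgeLabel G f R (cycleEdge f t) = numEnds G f (t + 1) - 1 := by
  rw [edgeLabel, if_neg cycleEdge_notMem_chords, h.injOn_cycleEdge.leftInvOn_invFunOn ht]

theorem le_edgeLabel_cycleEdge_iff (h : IsShortestChord G f B) (ht : t < Nat.card V) :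
    i ≤ edgeLabel G f R (cycleEdge f t) ↔ endAt G f i ≤ t := by
  rw [h.edgeLabel_cycleEdge ht, Nat.le_sub_one_iff_lt (h.numEnds_pos t.succ_pos),
    h.lt_numEnds_iff, Nat.lt_succ_iff]

theorem edgeLabel_lt_iff (h : IsShortestChord G f B) (he : e ∈ G.edgeSet) :
    edgeLabel G f R e < numEnds G f (Nat.card V) ↔ e ∉ chords G f := by
  by_cases hch : e ∈ chords G f
  · simp [edgeLabel_of_mem hch, hch]
  · obtain ⟨t, ht, rfl⟩ := h.exists_cycleEdge_eq he hch
    have hle : numEnds G f (t + 1) ≤ numEnds G f (Nat.card V) := numEnds_mono ht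
    have hpos := h.numEnds_pos t.succ_pos
    rw [h.edgeLabel_cycleEdge ht]
    exact iff_of_true (by lia) hch

theorem exists_edgeLabel_eq (h : IsShortestChord G f B) (hj : j < numEnds G f (Nat.card V)) :
    ∃ e ∈ G.edgeSet, edgeLabel G f R e = j := by
  have ht := h.lt_numEnds_iff.mp hj
  refine ⟨_, h.subset_edgeSet ⟨endAt G f j, rfl⟩, eq_of_le_of_not_lt' ?_ fun hlt => ?_⟩
  · exact (h.le_edgeLabel_cycleEdge_iff ht).mpr le_rfl
  · exact ((h.le_edgeLabel_cycleEdge_iff ht).mp hlt).not_gt (h.strictMono_endAt j.lt_succ_self)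

theorem maskSet_two_pow_sub_one (h : IsShortestChord G f B) :
    maskSet G.edgeSet (edgeLabel G f R) (2 ^ numEnds G f (Nat.card V) - 1) =
      Set.range (cycleEdge f) := by
  ext e
  simp only [maskSet, Set.mem_ofPred, Nat.testBit_two_pow_sub_one, decide_eq_true_eq]
  constructor
  · rintro ⟨he, hlt⟩
    obtain ⟨t, -, rfl⟩ := h.exists_cycleEdge_eq he ((h.edgeLabel_lt_iff he).mp hlt)
    exact ⟨t, rfl⟩
  · rintro ⟨t, rfl⟩
    have he := h.subset_edgeSet ⟨t, rfl⟩
    exact ⟨he, (h.edgeLabel_lt_iff he).mpr cycleEdge_notMem_chords⟩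

section List

variable (hR : (R.map (chordAt G f)).Nodup) (hmem : ∀ {e}, e ∈ R.map (chordAt G f) ↔ e ∈ chords G f)

include hmem in
theorem edgeLabel_lt (h : IsShortestChord G f B) (he : e ∈ G.edgeSet) :
    edgeLabel G f R e < numEnds G f (Nat.card V) + R.length := by
  classical
  by_cases hch : e ∈ chords G f
  · rw [edgeLabel_of_mem hch, add_lt_add_iff_left, ← List.length_map (chordAt G f)]
    exact List.idxOf_lt_length_of_mem (hmem.mpr hch)
  · exact ((h.edgeLabel_lt_iff he).mpr hch).trans_le (Nat.le_add_right _ _)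

include hR hmem in
theorem edgeLabel_eq_iff (h : IsShortestChord G f B) (hj : j < R.length) (he : e ∈ G.edgeSet) :
    edgeLabel G f R e = numEnds G f (Nat.card V) + j ↔ e = chordAt G f R[j] := by
  classical
  have hj' : j < (R.map (chordAt G f)).length := by rwa [List.length_map]
  have hget : (R.map (chordAt G f))[j] = chordAt G f R[j] := List.getElem_map _
  have hchord : chordAt G f R[j] ∈ chords G f := hmem.mp (hget ▸ List.getElem_mem hj')
  rw [← hget] at hchord ⊢
  constructor
  · intro hlab
    have hch : e ∈ chords G f := by
      by_contra hch
      have := (h.edgeLabel_lt_iff (R := R) he).mpr hch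
      lia
    rw [edgeLabel_of_mem hch, add_right_inj] at hlab
    subst hlab
    exact (List.getElem_idxOf hj').symm
  · rintro rfl
    rw [edgeLabel_of_mem hchord, hR.idxOf_getElem]

include hR hmem in
theorem maskSet_chordMask (h : IsShortestChord G f B) (hj : j < R.length)
    (hd : R[j].1 < R[j].2) (hdk : R[j].2 < numEnds G f (Nat.card V)) :
    maskSet G.edgeSet (edgeLabel G f R) (chordMask (numEnds G f (Nat.card V)) j R[j]) =
      (cycleEdge f '' Set.Ico (endAt G f R[j].1) (endAt G f R[j].2)) ∆ {chordAt G f R[j]} := by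
  have hchord : chordAt G f R[j] ∈ chords G f :=
    hmem.mp (List.mem_map_of_mem (List.getElem_mem hj))
  have hdisj : Disjoint (cycleEdge f '' Set.Ico (endAt G f R[j].1) (endAt G f R[j].2))
      {chordAt G f R[j]} := by
    rw [Set.disjoint_singleton_right]
    rintro ⟨t, -, ht⟩
    exact cycleEdge_notMem_chords (ht ▸ hchord)
  rw [hdisj.symmDiff_eq_sup]
  ext e
  simp only [maskSet, Set.mem_ofPred, testBit_chordMask hd hdk.le, Set.sup_eq_union, Set.mem_union,
    Set.mem_singleton_iff]
  have harc {t : ℕ} (ht : t < Nat.card V) :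
      R[j].1 ≤ edgeLabel G f R (cycleEdge f t) ∧ edgeLabel G f R (cycleEdge f t) < R[j].2 ↔
        t ∈ Set.Ico (endAt G f R[j].1) (endAt G f R[j].2) :=
    and_congr (h.le_edgeLabel_cycleEdge_iff ht)
      (lt_iff_lt_of_le_iff_le (h.le_edgeLabel_cycleEdge_iff ht))
  constructor
  · rintro ⟨he, hlab | hlab⟩
    · have hch := (h.edgeLabel_lt_iff he).mp (hlab.2.trans hdk)
      obtain ⟨t, ht, rfl⟩ := h.exists_cycleEdge_eq he hch
      exact .inl ⟨t, (harc ht).mp hlab, rfl⟩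
    · exact .inr ((h.edgeLabel_eq_iff hR hmem hj he).mp hlab)
  · rintro (⟨t, ht, rfl⟩ | rfl)
    · exact ⟨h.subset_edgeSet ⟨t, rfl⟩,
        .inl ((harc (ht.2.trans (h.lt_numEnds_iff.mp hdk))).mpr ht)⟩
    · exact ⟨hchord.1, .inr ((h.edgeLabel_eq_iff hR hmem hj hchord.1).mpr rfl)⟩

end List

theorem boundary_maskSet (h : IsShortestChord G f B) (hR : (R.map (chordAt G f)).Nodup)
    (hmem : ∀ {e}, e ∈ R.map (chordAt G f) ↔ e ∈ chords G f) (hj : j < R.length)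
    (hd : R[j].1 < R[j].2) (hdk : R[j].2 < numEnds G f (Nat.card V)) :
    boundary (maskSet G.edgeSet (edgeLabel G f R)
      (chordMask (numEnds G f (Nat.card V)) j R[j])) = 0 := by
  classical
  have hne : f (endAt G f R[j].1) ≠ f (endAt G f R[j].2) :=
    fun heq => hd.ne ((h.apply_endAt_inj (hd.trans hdk) hdk).mp heq)
  rw [h.maskSet_chordMask hR hmem hj hd hdk, boundary_symmDiff, chordAt, boundary_edge hne,
    h.boundary_path (h.strictMono_endAt hd).le (h.lt_numEnds_iff.mp hdk).le, add_self_eq_zero]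

theorem chordLabelling (h : IsShortestChord G f B) (hR : (R.map (chordAt G f)).Nodup)
    (hmem : ∀ {e}, e ∈ R.map (chordAt G f) ↔ e ∈ chords G f)
    (hlt : ∀ d ∈ R, d.1 < d.2 ∧ d.2 < numEnds G f (Nat.card V)) :
    ChordLabelling G.edgeSet (edgeLabel G f R) (numEnds G f (Nat.card V)) R.reverse := by
  refine ChordLabelling.reverse
    (.nil (fun j hj => h.exists_edgeLabel_eq hj) (h.maskSet_two_pow_sub_one ▸ h.isCircuit))
    fun j hj => ?_
  obtain ⟨hd, hdk⟩ := hlt _ (List.getElem_mem hj)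
  have hchord : chordAt G f R[j] ∈ G.edgeSet :=
    (hmem.mp (List.mem_map_of_mem (List.getElem_mem hj))).1
  refine ⟨hd, hdk.le, ⟨chordAt G f R[j], ?_⟩, h.boundary_maskSet hR hmem hj hd hdk⟩
  ext e
  rw [Set.mem_ofPred, Set.mem_singleton_iff]
  constructor
  · exact fun he => (h.edgeLabel_eq_iff hR hmem hj he.1).mp he.2
  · rintro rfl
    exact ⟨hchord, (h.edgeLabel_eq_iff hR hmem hj hchord).mpr rfl⟩

theorem exists_search_eq_true (h : IsShortestChord G f B) (hchords : (chords G f).ncard ≤ 5)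
    {r : ℕ} (hr : 3 ≤ r) (hcount : ∀ m ∈ Finset.Icc 3 (Nat.card V), cycleCount G m = r) :
    ∃ c < 5, ∃ k < 2 * c + 3, search c k = true := by
  set R := (0, numEnds G f B) :: laterChords G f (numEnds G f B) with hR
  have hlen : R.length = (chords G f).ncard := h.length_laterChords
  have hcover (i : ℕ) (hi : i < numEnds G f (Nat.card V)) : ∃ d ∈ R, i = d.1 ∨ i = d.2 :=
    h.exists_mem_cons_laterChords hi
  have hk : numEnds G f (Nat.card V) ≤ 2 * R.length := by
    simpa using card_le_two_mul_length fun i hi => hcover i (Finset.mem_range.mp hi)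
  have hlabelling : ChordLabelling G.edgeSet (edgeLabel G f R) (numEnds G f (Nat.card V))
      R.reverse := h.chordLabelling h.nodup_map_chordAt h.mem_map_chordAt fun d hd =>
      (h.mem_cons_laterChords.mp hd).imp_right And.left
  have htype : typeSearch (numEnds G f (Nat.card V))
      (cycles (numEnds G f (Nat.card V)) R.reverse) = true := by
    refine hlabelling.typeSearch_eq_true (h.numEnds_pos h.card_pos) (by lia) ?_ (fun e he => ?_) hr
      (h.maskSet_two_pow_sub_one ▸ h.ncard_eq) (fun E => ncard_mem_Icc_of_isCircuit)
      fun m hm => ?_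
    · rwa [List.length_reverse, hlen]
    · rw [List.length_reverse]
      exact h.edgeLabel_lt h.mem_map_chordAt he
    · rw [← cycleCount_eq_ncard_isCircuit G (Finset.mem_Icc.mp hm).1, hcount m hm]
  rw [hR, List.length_cons] at hlen hk
  refine ⟨(laterChords G f (numEnds G f B)).length, by lia, numEnds G f (Nat.card V), by lia, ?_⟩
  rw [hR, List.reverse_cons] at htype
  exact search_eq_true (by lia) (h.numEnds_pos h.pos) (numEnds_lt_numEnds h.isEnd h.lt_card)
    List.filter_sublist hcover htype

end IsShortestChord

end EdgeLabel

section Count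

variable {V : Type*} [Finite V] {G : SimpleGraph V} {f : ℕ → V} {r : ℕ}

theorem IsHamiltonianCycle.ncard_chords_add_card (hf : IsHamiltonianCycle G f) :
    (chords G f).ncard + Nat.card V = G.edgeSet.ncard := by
  rw [← hf.ncard_eq]
  exact Set.ncard_sdiff_add_ncard_of_subset hf.subset_edgeSet

theorem IsHamiltonianCycle.nonempty_chords (hf : IsHamiltonianCycle G f)
    (hV : 3 ≤ Nat.card V) (h : 1 < cycleCount G (Nat.card V)) : (chords G f).Nonempty := by
  by_contra hne
  have hrange : G.edgeSet ⊆ Set.range (cycleEdge f) :=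
    Set.sdiff_eq_empty.mp (Set.not_nonempty_iff_eq_empty.mp hne)
  rw [cycleCount_eq_ncard_isCircuit G hV, Set.one_lt_ncard] at h
  obtain ⟨E, ⟨hEG, hE, -⟩, F, ⟨hFG, hF, -⟩, hEF⟩ := h
  exact hEF ((hf.isCircuit.eq_of_le hE.prop (hEG.trans hrange)).trans
    (hf.isCircuit.eq_of_ge hF.prop (hFG.trans hrange)))

end Count

end RPancyclic

theorem no_r_pancyclic_with_few_edges {V : Type*} [Fintype V] (G : SimpleGraph V)
    (r : ℕ) (hr : 3 ≤ r) (he : G.edgeSet.ncard ≤ Fintype.card V + 5) :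
    ¬ IsRPancyclic G r := by
  rintro ⟨hV, hcount⟩
  rw [← Nat.card_eq_fintype_card] at hV he hcount
  have hcycles : 3 ≤ cycleCount G (Nat.card V) := hr.trans_eq (hcount _ hV le_rfl).symm
  obtain ⟨g, hg⟩ := RPancyclic.exists_isHamiltonianCycle hV (three_pos.trans_le hcycles)
  obtain ⟨f, B, hf⟩ := RPancyclic.exists_isShortestChord hg (hg.nonempty_chords hV (by lia))
  have hchords := hf.ncard_chords_add_card
  obtain ⟨c, hc, k, hk, hsearch⟩ := hf.exists_search_eq_true (by lia) hr fun m hm =>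
    hcount m (Finset.mem_Icc.mp hm).1 (Finset.mem_Icc.mp hm).2
  exact Bool.false_ne_true ((RPancyclic.search_eq_false c hc k hk).symm.trans hsearch)
end

section
/- There are, up to isomorphism, exactly two (2)-pancyclic graphs on 8 vertices with at most 13 edges. -/
open SimpleGraph

/-- There are, up to isomorphism, exactly `N` graphs on `v` vertices with at most
`b` edges satisfying the given pancyclicity property with parameter `r`. -/
def ExactlyNUpToIso (r N v b : ℕ) : Prop :=
  ∃ Gs : Fin N → SimpleGraph (Fin v),
    (∀ i j : Fin N, i ≠ j → IsEmpty (Gs i ≃g Gs j)) ∧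
    (∀ i : Fin N, IsRPancyclic (Gs i) r ∧ (Gs i).edgeSet.ncard ≤ b) ∧
    (∀ (W : Type) [Fintype W] (G : SimpleGraph W), Fintype.card W = v →
      G.edgeSet.ncard ≤ b → IsRPancyclic G r → ∃ i : Fin N, Nonempty (G ≃g Gs i))

/-!
A `(2)`-pancyclic graph on 8 vertices has a cycle through all vertices, so it is the cycle
`0, 1, …, 7` with some chords added, and after a rotation `{0, 2}` is a chord unless no chord joins
vertices at distance 2. The number of cycles of each length is monotone in the set of chords, so a
search for the remaining chords may discard every set that already gives three cycles of one length.
Both cases are then finite computations: without chords at distance 2 nothing is found, and the six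
chord sets containing `{0, 2}` fall into two dihedral classes.

The cycles of length `k` are counted through their parametrisations by `cycleGraph k`. A cycle has
exactly two that start at its least vertex, differing by a reflection, and these parametrisations
are the closed paths found by extending paths along neighbour lists.
-/

section Containment

variable {V W : Type*} {G : SimpleGraph V} {G' : SimpleGraph W}

lemma cycleCount_le_of_copy [Finite W] (f : Copy G G') (k : ℕ) :
    cycleCount G k ≤ cycleCount G' k := by
  refine Set.ncard_le_ncard_of_injOn (Subgraph.map f.toHom) ?_ ?_
  · rintro H ⟨e⟩
    exact ⟨(f.isoSubgraphMap H).symm.trans e⟩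
  · intro H _ H' _ h
    ext a b
    · rw [← f.injective.mem_set_image (s := H.verts), ← f.injective.mem_set_image (s := H'.verts)]
      exact Set.ext_iff.1 (congrArg Subgraph.verts h) (f a)
    · rw [← Relation.map_apply_apply f.injective f.injective H.Adj,
        ← Relation.map_apply_apply f.injective f.injective H'.Adj]
      exact (congrFun₂ (congrArg Subgraph.Adj h) (f a) (f b)).to_iff

lemma cycleCount_mono [Finite V] {H : SimpleGraph V} (h : H ≤ G) (k : ℕ) :
    cycleCount H k ≤ cycleCount G k :=
  cycleCount_le_of_copy (Copy.ofLE H G h) k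

lemma cycleCount_congr [Finite V] [Finite W] (e : G ≃g G') (k : ℕ) :
    cycleCount G k = cycleCount G' k :=
  (cycleCount_le_of_copy e.toCopy k).antisymm (cycleCount_le_of_copy e.symm.toCopy k)

lemma IsRPancyclic.congr [Fintype V] [Fintype W] {r : ℕ} (h : IsRPancyclic G r) (e : G ≃g G') :
    IsRPancyclic G' r := by
  rw [IsRPancyclic, ← Fintype.card_congr e.toEquiv]
  exact ⟨h.1, fun k hk hk' ↦ (cycleCount_congr e k).symm.trans (h.2 k hk hk')⟩

end Containment

section CycleGraph

variable {n : ℕ} {V : Type*} {G : SimpleGraph V}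

/-- Translation by `a`, as a rotation of the cycle graph. -/
def cycleRotation (a : Fin (n + 3)) : cycleGraph (n + 3) ≃g cycleGraph (n + 3) where
  toEquiv := Equiv.addRight a
  map_rel_iff' := by simp [cycleGraph_adj]

/-- Negation, as the reflection of the cycle graph that fixes `0`. -/
def cycleReflection : cycleGraph (n + 3) ≃g cycleGraph (n + 3) where
  toEquiv := Equiv.neg _
  map_rel_iff' := by simp [cycleGraph_adj, neg_add_eq_sub, or_comm]

lemma toSubgraph_comp_iso {A : Type*} {H : SimpleGraph A} (f : Copy H G) (e : H ≃g H) :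
    (f.comp e.toCopy).toSubgraph = f.toSubgraph :=
  (Subgraph.map_comp ⊤ e.toHom f.toHom).trans (by rw [Subgraph.map_iso_top])

lemma toSubgraph_adj_cycleGraph (f : Copy (cycleGraph (n + 3)) G) {i : Fin (n + 3)} {b : V} :
    f.toSubgraph.Adj (f i) b ↔ b = f (i + 1) ∨ b = f (i - 1) := by
  simp only [Subgraph.map_adj, Relation.Map, Subgraph.top_adj, Copy.toHom_apply, cycleGraph_adj,
    sub_eq_iff_eq_add]
  constructor
  · rintro ⟨j, l, h, hj, rfl⟩
    obtain rfl := f.injective hj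
    obtain rfl | rfl := h <;> simp [add_comm]
  · rintro (rfl | rfl)
    · exact ⟨i, i + 1, by simp [add_comm]⟩
    · exact ⟨i, i - 1, by simp⟩

lemma fin_one_ne_neg_one : (1 : Fin (n + 3)) ≠ -1 := by
  simp [Fin.ext_iff, Fin.val_neg]

lemma eq_of_toSubgraph_eq {f g : Copy (cycleGraph (n + 3)) G} (h : f.toSubgraph = g.toSubgraph)
    (h₀ : f 0 = g 0) (h₁ : f 1 = g 1) : f = g := by
  suffices key : ∀ i, f i = g i ∧ f (i + 1) = g (i + 1) from Copy.ext fun i ↦ (key i).1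
  intro i
  induction i using Fin.induction with
  | zero => simpa using ⟨h₀, h₁⟩
  | succ i ih =>
    rw [← Fin.coeSucc_eq_succ]
    refine ⟨ih.2, ?_⟩
    have hg := (toSubgraph_adj_cycleGraph g (i := i.castSucc + 1)).2 (.inl rfl)
    rw [← h, ← ih.2, toSubgraph_adj_cycleGraph, add_sub_cancel_right, ih.1] at hg
    refine (hg.resolve_right fun h' ↦ ?_).symm
    rw [add_assoc] at h'
    exact fin_one_ne_neg_one (eq_neg_iff_add_eq_zero.2 (add_eq_left.1 (g.injective h')))

lemma eq_or_eq_reflection {f g : Copy (cycleGraph (n + 3)) G} (h : f.toSubgraph = g.toSubgraph)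
    (h₀ : f 0 = g 0) : g = f ∨ g = f.comp cycleReflection.toCopy := by
  have h₁ : g.toSubgraph.Adj (g 0) (g 1) := toSubgraph_adj_cycleGraph g |>.2 (by simp)
  rw [← h, ← h₀, toSubgraph_adj_cycleGraph] at h₁
  refine h₁.imp (fun h₁ ↦ ?_) fun h₁ ↦ ?_
  · exact eq_of_toSubgraph_eq h.symm h₀.symm (by simpa using h₁)
  · refine eq_of_toSubgraph_eq (by rw [toSubgraph_comp_iso, h]) ?_ ?_
    · simpa [cycleReflection] using h₀.symm
    · simpa [cycleReflection] using h₁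

lemma nonempty_coe_iso_cycleGraph_iff {H : G.Subgraph} {A : Type*} {C : SimpleGraph A} :
    Nonempty (H.coe ≃g C) ↔ ∃ f : Copy C G, f.toSubgraph = H := by
  rw [← Set.mem_range, Copy.range_toSubgraph]
  exact ⟨fun ⟨e⟩ ↦ ⟨e.symm⟩, fun ⟨e⟩ ↦ ⟨e.symm⟩⟩

lemma comp_cycleReflection_ne (f : Copy (cycleGraph (n + 3)) G) :
    f ≠ f.comp cycleReflection.toCopy := fun h ↦
  fin_one_ne_neg_one (f.injective (DFunLike.congr_fun h 1))

/-- The parametrisations `f` of the cycles of length `n + 3` in `G` whose starting point `f 0` is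
the least vertex. Every such cycle has exactly two of them. -/
def rootedCycles [LE V] (G : SimpleGraph V) (n : ℕ) : Set (Copy (cycleGraph (n + 3)) G) :=
  {f | ∀ i, f 0 ≤ f i}

variable [LinearOrder V]

lemma exists_mem_rootedCycles (f : Copy (cycleGraph (n + 3)) G) :
    ∃ g ∈ rootedCycles G n, g.toSubgraph = f.toSubgraph := by
  obtain ⟨i, hi⟩ := Finite.exists_min f
  refine ⟨f.comp (cycleRotation i).toCopy, fun j ↦ ?_, toSubgraph_comp_iso f _⟩
  simpa [cycleRotation] using hi (j + i)

lemma apply_zero_eq_of_toSubgraph_eq {f g : Copy (cycleGraph (n + 3)) G}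
    (hf : f ∈ rootedCycles G n) (hg : g ∈ rootedCycles G n) (h : f.toSubgraph = g.toSubgraph) :
    f 0 = g 0 := by
  have hrange : Set.range f = Set.range g := by
    simpa using congrArg Subgraph.verts h
  obtain ⟨i, hi⟩ := hrange.subset ⟨0, rfl⟩
  obtain ⟨j, hj⟩ := hrange.superset ⟨0, rfl⟩
  exact (hj ▸ hf j).antisymm (hi ▸ hg i)

lemma rootedCycles_fiber {f : Copy (cycleGraph (n + 3)) G} (hf : f ∈ rootedCycles G n) :
    {g ∈ rootedCycles G n | g.toSubgraph = f.toSubgraph} =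
      {f, f.comp cycleReflection.toCopy} := by
  ext g
  constructor
  · rintro ⟨hg, h⟩
    exact eq_or_eq_reflection h.symm (apply_zero_eq_of_toSubgraph_eq hf hg h.symm)
  · rintro (rfl | rfl)
    · exact ⟨hf, rfl⟩
    · exact ⟨fun i ↦ by simpa [cycleReflection] using hf (-i), toSubgraph_comp_iso f _⟩

lemma ncard_rootedCycles [Finite V] : (rootedCycles G n).ncard = 2 * cycleCount G (n + 3) := by
  classical
  have : Finite (Copy (cycleGraph (n + 3)) G) := DFunLike.finite _
  rw [cycleCount, Set.ncard_eq_toFinset_card _, Set.ncard_eq_toFinset_card _,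
    Finset.card_eq_sum_card_fiberwise (f := Copy.toSubgraph), mul_comm]
  · refine Finset.sum_const_nat fun H hH ↦ ?_
    rw [Set.Finite.mem_toFinset] at hH
    obtain ⟨f, rfl⟩ := nonempty_coe_iso_cycleGraph_iff.1 hH
    obtain ⟨g, hg, hgf⟩ := exists_mem_rootedCycles f
    rw [← Set.ncard_coe_finset, ← hgf, Finset.coe_filter]
    simp only [Set.Finite.mem_toFinset]
    rw [rootedCycles_fiber hg, Set.ncard_pair (comp_cycleReflection_ne g)]
  · exact fun f _ ↦ by simpa using nonempty_coe_iso_cycleGraph_iff.2 ⟨f, rfl⟩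

end CycleGraph

section Enumeration

variable {V : Type*} [LinearOrder V] {G : SimpleGraph V} {N : V → List V} {n : ℕ}

/-- The lists `[uₙ, …, u₁, s]` of the vertices of the paths `s, u₁, …, uₙ` on which `s` is the
least vertex, in the graph whose neighbour lists are given by `N`. -/
def rootedPathLists (N : V → List V) (s : V) : ℕ → List (List V)
  | 0 => [[s]]
  | n + 1 => (rootedPathLists N s n).flatMap fun
    | [] => []
    | u :: l => ((N u).filter fun w ↦ s < w ∧ w ∉ l).map (· :: u :: l)

/-- The paths with `n` edges in `rootedPathLists`, starting from a vertex of `S`, that an edge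
closes to a cycle of length `n + 1`. -/
def rootedCycleLists (N : V → List V) (S : List V) (n : ℕ) : List (List V) :=
  S.flatMap fun s ↦ (rootedPathLists N s n).filter fun l ↦ ∃ u ∈ l.head?, s ∈ N u

lemma mem_rootedPathLists_succ {s : V} {l : List V} :
    l ∈ rootedPathLists N s (n + 1) ↔ ∃ u l' w, u :: l' ∈ rootedPathLists N s n ∧
      w ∈ N u ∧ s < w ∧ w ∉ l' ∧ w :: u :: l' = l := by
  simp only [rootedPathLists, List.mem_flatMap]
  constructor
  · rintro ⟨_ | ⟨u, l'⟩, hl', hl⟩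
    · simp at hl
    · simp only [List.mem_map, List.mem_filter, decide_eq_true_eq] at hl
      obtain ⟨w, ⟨hw, hsw, hwl⟩, rfl⟩ := hl
      exact ⟨u, l', w, hl', hw, hsw, hwl, rfl⟩
  · rintro ⟨u, l', w, hl', hw, hsw, hwl, rfl⟩
    exact ⟨u :: l', hl', by simp [hw, hsw, hwl]⟩

lemma mem_rootedPathLists (hN : ∀ u w, w ∈ N u ↔ G.Adj u w) {s : V} {l : List V} :
    l ∈ rootedPathLists N s n ↔
      l.length = n + 1 ∧ l.getLast? = some s ∧ l.IsChain G.Adj ∧ l.Nodup ∧ ∀ w ∈ l, s ≤ w := by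
  induction n generalizing l with
  | zero =>
    simp only [rootedPathLists, List.mem_singleton, zero_add, List.length_eq_one_iff]
    constructor
    · rintro rfl
      simp
    · rintro ⟨⟨a, rfl⟩, h, -⟩
      simpa using h
  | succ n ih =>
    simp only [mem_rootedPathLists_succ, ih, hN]
    constructor
    · rintro ⟨u, l', w, ⟨hlen, hlast, hchain, hnodup, hle⟩, hw, hsw, hwl, rfl⟩
      have hwu : w ∉ u :: l' := by simp [hwl, hw.ne']
      exact ⟨by simp [← hlen], by simpa using hlast, hchain.cons_cons hw.symm,
        hnodup.cons hwu, List.forall_mem_cons.2 ⟨hsw.le, hle⟩⟩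
    · rintro ⟨hlen, hlast, hchain, hnodup, hle⟩
      obtain ⟨w, u, l', rfl⟩ : ∃ w u l', l = w :: u :: l' := by
        match l, hlen with
        | w :: u :: l', _ => exact ⟨w, u, l', rfl⟩
      have hlast' : (u :: l').getLast? = some s := by simpa using hlast
      obtain ⟨hwl, hnodup'⟩ := List.nodup_cons.1 hnodup
      have hsw : s ≠ w := fun h ↦ hwl (h ▸ List.mem_of_getLast? hlast')
      obtain ⟨hw, hle'⟩ := List.forall_mem_cons.1 hle
      rw [List.isChain_cons_cons] at hchain
      exact ⟨u, l', w, ⟨by simpa using hlen, hlast', hchain.2, hnodup', hle'⟩, hchain.1.symm,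
        hw.lt_of_ne hsw, fun h ↦ hwl (List.mem_cons_of_mem u h), rfl⟩

lemma nodup_rootedPathLists (hN : ∀ u, (N u).Nodup) (s : V) :
    (rootedPathLists N s n).Nodup := by
  induction n with
  | zero => simp [rootedPathLists]
  | succ n ih =>
    rw [rootedPathLists, List.nodup_flatMap]
    constructor
    · rintro (_ | ⟨u, l⟩) -
      · simp
      · exact ((hN u).filter _).map fun _ _ h ↦ (List.cons.inj h).1
    · refine ih.imp fun {l₁ l₂} hne l h₁ h₂ ↦ hne ?_
      rcases l₁ with _ | ⟨u₁, l₁⟩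
      · simp at h₁
      rcases l₂ with _ | ⟨u₂, l₂⟩
      · simp at h₂
      obtain ⟨w₁, -, rfl⟩ := List.mem_map.1 h₁
      obtain ⟨w₂, -, h⟩ := List.mem_map.1 h₂
      exact (List.cons.inj h).2.symm

lemma nodup_rootedCycleLists (hN : ∀ u w, w ∈ N u ↔ G.Adj u w) (hN' : ∀ u, (N u).Nodup)
    {S : List V} (hS : S.Nodup) : (rootedCycleLists N S n).Nodup := by
  refine List.nodup_flatMap.2 ⟨fun s _ ↦ (nodup_rootedPathLists hN' s).filter _, ?_⟩
  refine hS.imp fun {s t} hst l hs ht ↦ hst ?_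
  rw [List.mem_filter, mem_rootedPathLists hN] at hs ht
  exact Option.some_injective _ (hs.1.2.1.symm.trans ht.1.2.1)

lemma reverse_ofFn_mem_rootedCycleLists (hN : ∀ u w, w ∈ N u ↔ G.Adj u w) {S : List V}
    (hS : ∀ s, s ∈ S) {f : Fin (n + 3) → V} :
    (List.ofFn f).reverse ∈ rootedCycleLists N S (n + 2) ↔
      Function.Injective f ∧ (∀ i, G.Adj (f i) (f (i + 1))) ∧ ∀ i, f 0 ≤ f i := by
  have hhead : (List.ofFn f).reverse.head? = some (f (Fin.last _)) := by
    rw [List.head?_reverse, List.getLast?_eq_some_getLast (by simp), List.getLast_ofFn_succ]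
  have hlast : (List.ofFn f).reverse.getLast? = some (f 0) := by
    rw [List.getLast?_reverse, List.ofFn_succ, List.head?_cons]
  have hchain : (List.ofFn f).reverse.IsChain G.Adj ↔
      ∀ i : Fin (n + 2), G.Adj (f i.castSucc) (f (i.castSucc + 1)) := by
    simp only [List.isChain_reverse, List.isChain_ofFn, Fin.forall_iff, Fin.coeSucc_eq_succ,
      G.adj_comm]
    exact forall_congr' fun i ↦ ⟨fun h hi ↦ (h (by omega)).symm, fun h hi ↦ (h (by omega)).symm⟩
  simp only [rootedCycleLists, List.mem_flatMap, List.mem_filter, mem_rootedPathLists hN, hN, hS,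
    hchain, hhead, hlast, Fin.forall_fin_succ' (P := fun i ↦ G.Adj (f i) (f (i + 1))),
    Fin.last_add_one, List.nodup_reverse, List.nodup_ofFn, List.length_reverse, List.length_ofFn,
    List.mem_reverse, List.forall_mem_ofFn_iff, decide_eq_true_eq, Option.mem_some_iff,
    Option.some_inj, exists_eq_left', true_and, and_assoc]
  tauto

lemma mem_rootedCycleLists (hN : ∀ u w, w ∈ N u ↔ G.Adj u w) {S : List V} (hS : ∀ s, s ∈ S)
    {l : List V} : l ∈ rootedCycleLists N S (n + 2) ↔
      ∃ f ∈ rootedCycles G n, (List.ofFn f).reverse = l := by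
  constructor
  · intro hl
    obtain ⟨f, hf⟩ : ∃ f : Fin (n + 3) → V, (List.ofFn f).reverse = l := by
      obtain ⟨s, -, hs⟩ := List.mem_flatMap.1 hl
      have hlen := ((mem_rootedPathLists hN).1 (List.mem_filter.1 hs).1).1
      refine ⟨fun i ↦ l.reverse[i]'(by rw [List.length_reverse, hlen]; exact i.is_lt), ?_⟩
      rw [List.reverse_eq_iff]
      exact List.ext_getElem (by simp [hlen]) fun _ _ _ ↦ List.getElem_ofFn ..
    obtain ⟨hinj, hadj, hmin⟩ := (reverse_ofFn_mem_rootedCycleLists hN hS).1 (hf ▸ hl)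
    refine ⟨⟨⟨f, ?_⟩, hinj⟩, hmin, hf⟩
    intro i j h
    rw [cycleGraph_adj, sub_eq_iff_eq_add', sub_eq_iff_eq_add'] at h
    obtain rfl | rfl := h
    · exact (hadj j).symm
    · exact hadj i
  · rintro ⟨f, hf, rfl⟩
    exact (reverse_ofFn_mem_rootedCycleLists hN hS).2
      ⟨f.injective, fun i ↦ f.toHom.map_adj (by simp [cycleGraph_adj]), hf⟩

lemma length_rootedCycleLists (hN : ∀ u w, w ∈ N u ↔ G.Adj u w) (hN' : ∀ u, (N u).Nodup)
    {S : List V} (hS : ∀ s, s ∈ S) (hS' : S.Nodup) :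
    (rootedCycleLists N S (n + 2)).length = 2 * cycleCount G (n + 3) := by
  have : Finite V := Set.finite_univ_iff.1 ((List.finite_toSet S).subset fun s _ ↦ hS s)
  have himage : {l | l ∈ rootedCycleLists N S (n + 2)} =
      (fun f : Copy _ _ ↦ (List.ofFn f).reverse) '' rootedCycles G n :=
    Set.ext fun l ↦ mem_rootedCycleLists hN hS
  have hinj : Function.Injective fun f : Copy (cycleGraph (n + 3)) G ↦ (List.ofFn f).reverse :=
    fun f g h ↦ DFunLike.coe_injective (List.ofFn_injective (List.reverse_injective h))
  rw [← ncard_rootedCycles, ← Set.ncard_image_of_injective _ hinj, ← himage, ← List.coe_toFinset,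
    Set.ncard_coe_finset, List.toFinset_card_of_nodup (nodup_rootedCycleLists hN hN' hS')]

end Enumeration

section PrunedSublists

open scoped List

variable {α : Type*}

/-- A list of sublists of `l` satisfying `p`, found by extending shorter ones at the front. It
contains every sublist all of whose own sublists satisfy `p`. -/
def prunedSublists (p : List α → Bool) : List α → List (List α)
  | [] => [[]]
  | a :: l => prunedSublists p l ++ ((prunedSublists p l).map (a :: ·)).filter p

lemma mem_prunedSublists {p : List α → Bool} {l l' : List α} (h : l' <+ l)
    (hp : ∀ l'', l'' <+ l' → p l'') :
    l' ∈ prunedSublists p l := by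
  induction h with
  | slnil => simp [prunedSublists]
  | cons a _ ih => exact List.mem_append_left _ (ih hp)
  | cons_cons a _ ih =>
    have htail := ih fun l'' h'' ↦ hp l'' (h''.cons a)
    simpa [prunedSublists, hp _ (.refl _)] using .inr htail

end PrunedSublists

section ChordGraph

open scoped List

variable {n r : ℕ} {L L' : List (Fin (n + 3) × Fin (n + 3))}

/-- The cycle graph on `Fin (n + 3)` with the pairs in `L` added as chords. -/
def chordGraph (L : List (Fin (n + 3) × Fin (n + 3))) : SimpleGraph (Fin (n + 3)) :=
  cycleGraph (n + 3) ⊔ fromRel fun a b ↦ (a, b) ∈ L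

lemma chordGraph_adj {a b : Fin (n + 3)} : (chordGraph L).Adj a b ↔
    (a - b = 1 ∨ b - a = 1) ∨ a ≠ b ∧ ((a, b) ∈ L ∨ (b, a) ∈ L) := by
  rw [chordGraph, sup_adj, cycleGraph_adj, fromRel_adj]

instance : DecidableRel (chordGraph L).Adj := fun _ _ ↦ decidable_of_iff' _ chordGraph_adj

lemma chordGraph_mono (h : L ⊆ L') : chordGraph L ≤ chordGraph L' :=
  sup_le_sup_left (fun _ _ hab ↦ ⟨hab.1, hab.2.imp (@h _) (@h _)⟩) _

lemma chordGraph_le {H : SimpleGraph (Fin (n + 3))} :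
    chordGraph L ≤ H ↔ cycleGraph (n + 3) ≤ H ∧ ∀ e ∈ L, e.1 ≠ e.2 → H.Adj e.1 e.2 := by
  rw [chordGraph, sup_le_iff]
  refine and_congr_right' ⟨fun h e he hne ↦ h ⟨hne, .inl he⟩, fun h a b hab ↦ ?_⟩
  exact hab.2.elim (fun he ↦ h _ he hab.1) fun he ↦ (h _ he hab.1.symm).symm

lemma chordGraph_append_filter_adj {H : SimpleGraph (Fin (n + 3))} [DecidableRel H.Adj]
    (hL : chordGraph L ≤ H) (hH : H ≤ chordGraph (L ++ L')) :
    chordGraph (L ++ L'.filter fun e ↦ H.Adj e.1 e.2) = H := by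
  ext a b
  have hle := @hL a b
  have hge := @hH a b
  have hne := H.ne_of_adj (a := a) (b := b)
  simp only [chordGraph_adj, List.mem_append, List.mem_filter, decide_eq_true_eq,
    H.adj_comm b a] at hle hge ⊢
  tauto

/-- The neighbours of `u` in `chordGraph L`. -/
def chordNeighbors (L : List (Fin (n + 3) × Fin (n + 3))) (u : Fin (n + 3)) :
    List (Fin (n + 3)) :=
  (u + 1) :: (u - 1) :: L.filterMap fun e ↦
    if u = e.1 then some e.2 else if u = e.2 then some e.1 else none

/-- The pairs in `L` join nonadjacent vertices of the cycle graph and give distinct chords, also up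
to orientation. This is phrased through neighbour lists so that it can be decided. -/
def IsChordList (L : List (Fin (n + 3) × Fin (n + 3))) : Prop :=
  ∀ u, (u :: chordNeighbors L u).Nodup

instance : Decidable (IsChordList L) :=
  inferInstanceAs (Decidable (∀ u, (u :: chordNeighbors L u).Nodup))

lemma IsChordList.sublist (hL : IsChordList L) (h : L' <+ L) : IsChordList L' := fun u ↦
  (hL u).sublist ((((h.filterMap _).cons_cons _).cons_cons _).cons_cons _)

lemma IsChordList.mem_chordNeighbors (hL : IsChordList L) (u w : Fin (n + 3)) :
    w ∈ chordNeighbors L u ↔ (chordGraph L).Adj u w := by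
  have hu : u ∉ chordNeighbors L u := (List.nodup_cons.1 (hL u)).1
  have hmem (w) : w ∈ chordNeighbors L u ↔
      (u - w = 1 ∨ w - u = 1) ∨ (u, w) ∈ L ∨ (w, u) ∈ L := by
    simp only [chordNeighbors, List.mem_cons, List.mem_filterMap, Prod.exists]
    grind
  have hne : w ∈ chordNeighbors L u → u ≠ w := fun hw h ↦ hu (h ▸ hw)
  rw [chordGraph_adj]
  rw [hmem] at hne ⊢
  tauto

/-- The list whose entry at `k` is twice the number of cycles of length `k + 3` in
`chordGraph L`, for `k = 0, …, n`. -/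
def cycleSpectrum (L : List (Fin (n + 3) × Fin (n + 3))) : List ℕ :=
  (List.range (n + 1)).map fun k ↦
    (rootedCycleLists (chordNeighbors L) (List.finRange (n + 3)) (k + 2)).length

lemma IsChordList.forall_mem_cycleSpectrum (hL : IsChordList L) {p : ℕ → Prop} :
    (∀ c ∈ cycleSpectrum L, p c) ↔ ∀ k ≤ n, p (2 * cycleCount (chordGraph L) (k + 3)) := by
  have hcount (k : ℕ) := length_rootedCycleLists (n := k) hL.mem_chordNeighbors
    (fun u ↦ (List.nodup_cons.1 (hL u)).2) List.mem_finRange (List.nodup_finRange _)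
  simp [cycleSpectrum, hcount]

lemma IsChordList.isRPancyclic_iff (hL : IsChordList L) :
    IsRPancyclic (chordGraph L) r ↔ ∀ c ∈ cycleSpectrum L, c = 2 * r := by
  rw [hL.forall_mem_cycleSpectrum, IsRPancyclic, Fintype.card_fin]
  constructor
  · rintro ⟨-, h⟩ k hk
    rw [h (k + 3) (by omega) (by omega)]
  · refine fun h ↦ ⟨by omega, fun k hk hkn ↦ ?_⟩
    obtain ⟨k, rfl⟩ := Nat.exists_eq_add_of_le' hk
    simpa using h k (by omega)

lemma IsChordList.cycleSpectrum_le (hL : IsChordList L) (h : IsRPancyclic (chordGraph L) r)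
    (hL' : L' <+ L) : ∀ c ∈ cycleSpectrum L', c ≤ 2 * r := by
  rw [(hL.sublist hL').forall_mem_cycleSpectrum]
  intro k hk
  rw [← h.2 (k + 3) (by omega) (by simpa using hk)]
  exact Nat.mul_le_mul_left 2 (cycleCount_mono (chordGraph_mono hL'.subset) _)

/-- The sublists `L` of `cs`, found by a pruned search, for which adding the chords in `B ++ L` to
the cycle graph gives an `(r)`-pancyclic graph. -/
def pancyclicExtensions (r : ℕ) (B cs : List (Fin (n + 3) × Fin (n + 3))) :
    List (List (Fin (n + 3) × Fin (n + 3))) :=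
  (prunedSublists (fun L ↦ ∀ c ∈ cycleSpectrum (B ++ L), c ≤ 2 * r) cs).filter fun L ↦
    ∀ c ∈ cycleSpectrum (B ++ L), c = 2 * r

lemma exists_mem_pancyclicExtensions {B cs : List (Fin (n + 3) × Fin (n + 3))}
    (hcs : IsChordList (B ++ cs)) {H : SimpleGraph (Fin (n + 3))} (hB : chordGraph B ≤ H)
    (hH : H ≤ chordGraph (B ++ cs)) (h : IsRPancyclic H r) :
    ∃ L ∈ pancyclicExtensions r B cs, chordGraph (B ++ L) = H := by
  classical
  set L := cs.filter fun e ↦ H.Adj e.1 e.2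
  have hL : chordGraph (B ++ L) = H := chordGraph_append_filter_adj hB hH
  have hsub : L <+ cs := List.filter_sublist
  have hBL : IsChordList (B ++ L) := hcs.sublist (hsub.append_left B)
  rw [← hL] at h
  refine ⟨L, List.mem_filter.2 ⟨mem_prunedSublists hsub fun L' hL' ↦ ?_, ?_⟩, hL⟩
  · exact decide_eq_true (hBL.cycleSpectrum_le h (hL'.append_left B))
  · exact decide_eq_true (hBL.isRPancyclic_iff.1 h)

end ChordGraph

section Hamiltonian

variable {n : ℕ}

lemma exists_iso_ge_cycleGraph {W : Type*} [Fintype W] {G : SimpleGraph W}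
    (hW : Fintype.card W = n) (hG : cycleCount G n ≠ 0) :
    ∃ H : SimpleGraph (Fin n), cycleGraph n ≤ H ∧ Nonempty (G ≃g H) := by
  obtain ⟨S, e⟩ := Set.nonempty_of_ncard_ne_zero hG
  obtain ⟨f, -⟩ := nonempty_coe_iso_cycleGraph_iff.1 e
  have hf : Function.Bijective f :=
    (Fintype.bijective_iff_injective_and_card f).2 ⟨f.injective, by simp [hW]⟩
  let σ := Equiv.ofBijective f hf
  exact ⟨G.comap σ, fun a b h ↦ f.toHom.map_adj h, ⟨(Iso.comap σ G).symm⟩⟩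

lemma exists_iso_adj_zero {H : SimpleGraph (Fin (n + 3))} (hH : cycleGraph (n + 3) ≤ H)
    {i d : Fin (n + 3)} (h : H.Adj i (d + i)) :
    ∃ H' : SimpleGraph (Fin (n + 3)),
      cycleGraph (n + 3) ≤ H' ∧ H'.Adj 0 d ∧ Nonempty (H ≃g H') := by
  refine ⟨H.comap (Equiv.addRight i), fun a b hab ↦ ?_, by simpa using h,
    ⟨(Iso.comap (Equiv.addRight i) H).symm⟩⟩
  exact hH ((cycleRotation i).map_rel_iff.2 hab)

end Hamiltonian

section OrderEight

/-- The chords of the 8-cycle other than `{0, 2}` that join vertices at distance 2. -/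
def shortChords : List (Fin 8 × Fin 8) :=
  [(1, 3), (2, 4), (3, 5), (4, 6), (5, 7), (6, 0), (7, 1)]

/-- The chords of the 8-cycle that join vertices at distance 3 or 4. -/
def longChords : List (Fin 8 × Fin 8) :=
  [(0, 3), (1, 4), (2, 5), (3, 6), (4, 7), (5, 0), (6, 1), (7, 2), (0, 4), (1, 5), (2, 6), (3, 7)]

/-- The chords of the two `(2)`-pancyclic graphs on 8 vertices. The first graph has a vertex of
degree 4, the second has not. -/
def twoPancyclicChords : Fin 2 → List (Fin 8 × Fin 8) :=
  ![[(0, 2), (1, 3), (3, 6)], [(0, 2), (1, 3), (4, 7)]]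

lemma isChordList_cons_shortChords_append_longChords :
    IsChordList ((0, 2) :: (shortChords ++ longChords)) := by
  decide

lemma isRPancyclic_twoPancyclicChords (i : Fin 2) :
    IsRPancyclic (chordGraph (twoPancyclicChords i)) 2 := by
  have hchords : ∀ i, IsChordList (twoPancyclicChords i) := by decide
  refine (hchords i).isRPancyclic_iff.2 ?_
  revert i
  decide +kernel

lemma ncard_edgeSet_twoPancyclicChords (i : Fin 2) :
    (chordGraph (twoPancyclicChords i)).edgeSet.ncard = 11 := by
  rw [Set.ncard_eq_toFinset_card']
  revert i
  decide +kernel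

lemma isEmpty_twoPancyclicChords_iso :
    IsEmpty (chordGraph (twoPancyclicChords 0) ≃g chordGraph (twoPancyclicChords 1)) :=
  ⟨fun e ↦ absurd e.maxDegree_eq (by decide +kernel)⟩

lemma pancyclicExtensions_longChords : pancyclicExtensions 2 [] longChords = [] := by
  decide +kernel

lemma pancyclicExtensions_shortChords_append_longChords :
    pancyclicExtensions 2 [(0, 2)] (shortChords ++ longChords) =
      [[(7, 1), (4, 7)], [(7, 1), (3, 6)], [(7, 1), (2, 5)],
        [(1, 3), (5, 0)], [(1, 3), (4, 7)], [(1, 3), (3, 6)]] := by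
  decide +kernel

lemma exists_iso_twoPancyclicChords_of_mem {L : List (Fin 8 × Fin 8)}
    (hL : L ∈ pancyclicExtensions 2 [(0, 2)] (shortChords ++ longChords)) :
    ∃ i, Nonempty (chordGraph ((0, 2) :: L) ≃g chordGraph (twoPancyclicChords i)) := by
  simp only [pancyclicExtensions_shortChords_append_longChords, List.mem_cons,
    List.not_mem_nil, or_false] at hL
  obtain rfl | rfl | rfl | rfl | rfl | rfl := hL
  · exact ⟨0, ⟨⟨Equiv.subLeft 2, by decide +kernel⟩⟩⟩
  · exact ⟨1, ⟨⟨Equiv.subLeft 2, by decide +kernel⟩⟩⟩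
  · exact ⟨0, ⟨⟨Equiv.addRight 1, by decide +kernel⟩⟩⟩
  · exact ⟨0, ⟨⟨Equiv.subLeft 3, by decide +kernel⟩⟩⟩
  · exact ⟨1, ⟨.refl⟩⟩
  · exact ⟨0, ⟨.refl⟩⟩

variable {H : SimpleGraph (Fin 8)}

lemma exists_iso_twoPancyclicChords_of_adj (hH : cycleGraph 8 ≤ H) (h : IsRPancyclic H 2)
    (h₀ : H.Adj 0 2) : ∃ i, Nonempty (H ≃g chordGraph (twoPancyclicChords i)) := by
  have hle : chordGraph [(0, 2)] ≤ H := chordGraph_le.2 ⟨hH, by simpa using h₀⟩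
  have htop : ⊤ ≤ chordGraph ((0, 2) :: (shortChords ++ longChords)) := by
    intro a b
    revert a b
    decide +kernel
  obtain ⟨L, hL, rfl⟩ := exists_mem_pancyclicExtensions
    isChordList_cons_shortChords_append_longChords hle (le_top.trans htop) h
  exact exists_iso_twoPancyclicChords_of_mem hL

lemma exists_adj_add_two (hH : cycleGraph 8 ≤ H) (h : IsRPancyclic H 2) :
    ∃ i, H.Adj i (2 + i) := by
  by_contra! hshort
  have hle : chordGraph [] ≤ H := chordGraph_le.2 ⟨hH, by simp⟩
  have hcases : ∀ a b : Fin 8,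
      a = b ∨ b = 2 + a ∨ a = 2 + b ∨ (chordGraph longChords).Adj a b := by
    decide +kernel
  have hlong : H ≤ chordGraph longChords := by
    intro a b hab
    obtain rfl | rfl | rfl | hab' := hcases a b
    · exact (hab.ne rfl).elim
    · exact (hshort a hab).elim
    · exact (hshort b hab.symm).elim
    · exact hab'
  obtain ⟨L, hL, -⟩ := exists_mem_pancyclicExtensions (B := []) (cs := longChords)
    (by decide) hle hlong h
  rw [pancyclicExtensions_longChords] at hL
  exact List.not_mem_nil hL

lemma exists_iso_twoPancyclicChords {W : Type*} [Fintype W] {G : SimpleGraph W}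
    (hW : Fintype.card W = 8) (hG : IsRPancyclic G 2) :
    ∃ i, Nonempty (G ≃g chordGraph (twoPancyclicChords i)) := by
  have hcount : cycleCount G 8 ≠ 0 := by
    rw [hG.2 8 (by norm_num) hW.ge]
    norm_num
  obtain ⟨H, hH, ⟨e⟩⟩ := exists_iso_ge_cycleGraph hW hcount
  obtain ⟨i, hi⟩ := exists_adj_add_two hH (hG.congr e)
  obtain ⟨H', hH', h₀, ⟨e'⟩⟩ := exists_iso_adj_zero hH hi
  obtain ⟨j, ⟨f⟩⟩ := exists_iso_twoPancyclicChords_of_adj hH' (hG.congr (e.trans e')) h₀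
  exact ⟨j, ⟨(e.trans e').trans f⟩⟩

end OrderEight

theorem two_pancyclic_count_order_8_general {b : ℕ} (hb : 11 ≤ b) : ExactlyNUpToIso 2 2 8 b := by
  refine ⟨fun i ↦ chordGraph (twoPancyclicChords i), fun i j hij ↦ ?_, fun i ↦ ?_,
    fun W _ G hW _ hG ↦ ?_⟩
  · obtain ⟨rfl, rfl⟩ | ⟨rfl, rfl⟩ : i = 0 ∧ j = 1 ∨ i = 1 ∧ j = 0 := by omega
    · exact isEmpty_twoPancyclicChords_iso
    · exact ⟨fun e ↦ isEmpty_twoPancyclicChords_iso.false e.symm⟩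
  · exact ⟨isRPancyclic_twoPancyclicChords i, (ncard_edgeSet_twoPancyclicChords i).trans_le hb⟩
  · exact exists_iso_twoPancyclicChords hW hG

theorem two_pancyclic_count_order_8 : ExactlyNUpToIso 2 2 8 13 :=
  two_pancyclic_count_order_8_general (by norm_num)
end
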